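/- arXiv:1006.0590 — 2 statements merged into one kernel-verified Lean document; each statement's English description precedes it below -/
import Mathlib

section
/- If G is a digraph with κ(G) ≥ 2^{α₂(G)} · (α₂(G) + 2)!, then G has a Hamilton cycle. -/
/-- `f` is a Hamilton cycle of the digraph `G`. -/
def IsHamCycle {V : Type*} [Fintype V] (G : V → V → Prop)
    (f : ZMod (Fintype.card V) → V) : Prop :=
  Function.Bijective f ∧ ∀ i, G (f i) (f (i + 1))

/-- The digraph `G` restricted to the set `A` is strongly connected: between any two
vertices of `A` there is a directed path all of whose vertices lie in `A`. -/
def StrongOn {V : Type*} (G : V → V → Prop) (A : Set V) : Prop :=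
  ∀ x ∈ A, ∀ y ∈ A, Relation.ReflTransGen (fun a b => a ∈ A ∧ b ∈ A ∧ G a b) x y

/-- The connectivity κ(G): the size of a smallest vertex set `S` such that `G − S` is
not strongly connected or consists of a single vertex. -/
noncomputable def kappa {V : Type*} [Fintype V] (G : V → V → Prop) : ℕ :=
  sInf {k | ∃ S : Set V, S.ncard = k ∧ (¬ StrongOn G Sᶜ ∨ Sᶜ.ncard = 1)}

/-- α₂(G): the size of a largest vertex set containing no 2-cycle. -/
noncomputable def alphaTwo {V : Type*} [Fintype V] (G : V → V → Prop) : ℕ :=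
  sSup {k | ∃ S : Set V, S.ncard = k ∧ ∀ x ∈ S, ∀ y ∈ S, ¬ (G x y ∧ G y x)}

section HamPath

variable {V : Type*}

/-- `A` is the vertex set of a directed `r`-path from `a` to `b`. -/
def IsPathOn (r : V → V → Prop) (a b : V) (A : Finset V) : Prop :=
  ∃ l : List V, l.Nodup ∧ l.IsChain r ∧ (∀ x, x ∈ l ↔ x ∈ A) ∧
    l.head? = some a ∧ l.getLast? = some b

namespace IsPathOn

variable {r s : V → V → Prop} {a b c d : V} {A B : Finset V}

lemma singleton (r : V → V → Prop) (a : V) : IsPathOn r a a {a} :=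
  ⟨[a], by simp, by simp, by simp, by simp, by simp⟩

lemma mono (hrs : ∀ x y, r x y → s x y) (h : IsPathOn r a b A) : IsPathOn s a b A := by
  obtain ⟨l, h1, h2, h3⟩ := h
  exact ⟨l, h1, h2.imp hrs, h3⟩

lemma left_mem (h : IsPathOn r a b A) : a ∈ A := by
  obtain ⟨l, -, -, h3, h4, -⟩ := h
  exact (h3 a).1 (List.mem_of_mem_head? h4)

lemma right_mem (h : IsPathOn r a b A) : b ∈ A := by
  obtain ⟨l, -, -, h3, -, h5⟩ := h
  exact (h3 b).1 (List.mem_of_getLast? h5)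

lemma reverse (hr : ∀ x y, r x y → r y x) (h : IsPathOn r a b A) : IsPathOn r b a A := by
  obtain ⟨l, h1, h2, h3, h4, h5⟩ := h
  refine ⟨l.reverse, by simpa using h1, ?_, by simpa using h3, by simpa using h5,
    by simpa using h4⟩
  rw [List.isChain_reverse]
  exact h2.imp fun x y h => hr x y h

lemma append [DecidableEq V] (h : IsPathOn r a b A) (h' : IsPathOn r c d B)
    (hAB : Disjoint A B) (hbc : r b c) : IsPathOn r a d (A ∪ B) := by
  obtain ⟨l, h1, h2, h3, h4, h5⟩ := h
  obtain ⟨m, g1, g2, g3, g4, g5⟩ := h'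
  refine ⟨l ++ m, ?_, ?_, by simp [h3, g3], by simp [h4], by simp [g5]⟩
  · refine List.nodup_append'.2 ⟨h1, g1, ?_⟩
    intro x hx hx'
    exact Finset.disjoint_left.1 hAB ((h3 x).1 hx) ((g3 x).1 hx')
  · refine List.isChain_append.2 ⟨h2, g2, ?_⟩
    simpa [h5, g4] using hbc

lemma uncons [DecidableEq V] (h : IsPathOn r a b A) :
    (a = b ∧ A = {a}) ∨ ∃ c, r a c ∧ IsPathOn r c b (A.erase a) := by
  obtain ⟨l, h1, h2, h3, h4, h5⟩ := h
  match l, h1, h2, h3, h4, h5 with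
  | [x], h1, h2, h3, h4, h5 =>
    left
    simp at h4 h5
    subst h4 h5
    refine ⟨rfl, ?_⟩
    ext y
    simp [← h3]
  | x :: y :: l, h1, h2, h3, h4, h5 =>
    right
    simp at h4
    subst h4
    rw [List.isChain_cons_cons] at h2
    refine ⟨y, h2.1, y :: l, h1.of_cons, h2.2, ?_, by simp, by simpa using h5⟩
    intro z
    rw [Finset.mem_erase, ← h3]
    have := (List.nodup_cons.1 h1).1
    constructor
    · intro hz
      exact ⟨fun h => this (h ▸ hz), List.mem_cons_of_mem _ hz⟩
    · rintro ⟨hne, hz⟩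
      exact (List.mem_cons.1 hz).resolve_left hne

lemma glue [DecidableEq V] (h : IsPathOn r a b A) (h' : IsPathOn r b c B)
    (hAB : ∀ x ∈ A, x ∈ B → x = b) : IsPathOn r a c (A ∪ B) := by
  rcases h'.uncons with ⟨rfl, rfl⟩ | ⟨d, hd, hB⟩
  · rwa [Finset.union_eq_left.2 (by simpa using h.right_mem)]
  · have := h.append hB (Finset.disjoint_left.2 fun x hx hx' =>
      (Finset.mem_erase.1 hx').1 (hAB x hx (Finset.mem_of_mem_erase hx'))) hd
    convert this using 1
    ext x
    have := h.right_mem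
    simp only [Finset.mem_union, Finset.mem_erase]
    grind

end IsPathOn

/-- A chain without forward shortcuts contains every second vertex as a set without 2-cycles. -/
lemma exists_indep_of_noShortcut (r : V → V → Prop) (hr : ∀ x, ¬ r x x) :
    ∀ l : List V, l.Nodup →
      (∀ p x y q, l = p ++ x :: y :: q → ∀ z ∈ q, ¬ r x z) →
      ∃ I : Finset V, (∀ x ∈ I, x ∈ l) ∧ (∀ x ∈ I, ∀ y ∈ I, ¬ (r x y ∧ r y x)) ∧
        l.length ≤ 2 * I.card
  | [], _, _ => ⟨∅, by simp⟩
  | [x], _, _ => ⟨{x}, by simp [hr]⟩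
  | x :: y :: q, hnd, hns => by
    classical
    obtain ⟨I, hIq, hI, hc⟩ := exists_indep_of_noShortcut r hr q hnd.of_cons.of_cons
      (fun p u v t h => hns (x :: y :: p) u v t (by simp [h]))
    have hx : ∀ z ∈ q, ¬ r x z := hns [] x y q rfl
    have hxI : x ∉ I := fun h => by
      have := (List.nodup_cons.1 hnd).1
      exact this (List.mem_cons_of_mem _ (hIq x h))
    refine ⟨insert x I, ?_, ?_, ?_⟩
    · intro z hz
      rcases Finset.mem_insert.1 hz with rfl | hz
      · simp
      · simp [hIq z hz]
    · intro u hu v hv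
      rw [Finset.mem_insert] at hu hv
      rcases hu with rfl | hu <;> rcases hv with rfl | hv
      · exact fun h => hr _ h.1
      · exact fun h => hx v (hIq v hv) h.1
      · exact fun h => hx u (hIq u hu) h.2
      · exact hI u hu v hv
    · rw [Finset.card_insert_of_notMem hxI]
      simp only [List.length_cons]
      omega

lemma nodup_of_forall_append :
    ∀ l : List V, (∀ p x q, l = p ++ x :: q → x ∉ q) → l.Nodup
  | [], _ => List.nodup_nil
  | x :: l, h => List.nodup_cons.2 ⟨h [] x l rfl,
      nodup_of_forall_append l fun p y q hl => h (x :: p) y q (by simp [hl])⟩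

/-- Reachability inside `X` is witnessed by a path in `X` with at most `2 * α` vertices, if `α`
bounds the size of the sets without 2-cycles. -/
lemma exists_isPathOn_card_le (r : V → V → Prop) (hr : ∀ x, ¬ r x x) (α : ℕ)
    (hα : ∀ I : Finset V, (∀ x ∈ I, ∀ y ∈ I, ¬ (r x y ∧ r y x)) → I.card ≤ α)
    (X : Set V) (a b : V) (ha : a ∈ X)
    (h : Relation.ReflTransGen (fun x y => x ∈ X ∧ y ∈ X ∧ r x y) a b) :
    ∃ M : Finset V, IsPathOn r a b M ∧ (∀ x ∈ M, x ∈ X) ∧ M.card ≤ 2 * α := by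
  classical
  have key : ∃ n, ∃ l : List V, l.length = n ∧ l.IsChain r ∧ (∀ x ∈ l, x ∈ X) ∧
      l.head? = some a ∧ l.getLast? = some b := by
    induction h with
    | refl => exact ⟨_, [a], rfl, by simp, by simpa using ha, by simp, by simp⟩
    | @tail d c _ hbc ih =>
      obtain ⟨_, l, -, h1, h2, h3, h4⟩ := ih
      refine ⟨_, l ++ [c], rfl, List.isChain_append.2 ⟨h1, by simp, ?_⟩, ?_, ?_, by simp⟩
      · simpa [h4] using hbc.2.2
      · intro x hx
        rcases List.mem_append.1 hx with hx | hx
        · exact h2 x hx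
        · rw [List.mem_singleton.1 hx]; exact hbc.2.1
      · simp [h3]
  obtain ⟨l, hlen, hch, hX, hhd, hlast⟩ := Nat.find_spec key
  have hmin : ∀ m : List V, m.IsChain r → (∀ x ∈ m, x ∈ X) → m.head? = some a →
      m.getLast? = some b → l.length ≤ m.length := by
    intro m h1 h2 h3 h4
    rw [hlen]
    exact Nat.find_min' key ⟨m, rfl, h1, h2, h3, h4⟩
  have hns : ∀ p x y q, l = p ++ x :: y :: q → ∀ z ∈ q, ¬ r x z := by
    rintro p x y q rfl z hz hxz
    obtain ⟨q₁, q₂, rfl⟩ := List.append_of_mem hz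
    have h1 := List.isChain_split.1 hch
    have h2 := List.isChain_split (l₁ := x :: y :: q₁) |>.1 h1.2
    have := hmin (p ++ x :: z :: q₂)
      (List.isChain_split.2 ⟨h1.1, List.isChain_cons_cons.2 ⟨hxz, h2.2⟩⟩)
      (by intro w hw; apply hX; simp at hw ⊢; tauto)
      (by cases p <;> simpa using hhd) (by simpa [List.getLast?_cons, List.getLast?_append] using hlast)
    simp at this
    omega
  have hnd : l.Nodup := by
    refine nodup_of_forall_append l fun p x q h hx => ?_
    subst h
    obtain ⟨q₁, q₂, rfl⟩ := List.append_of_mem hx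
    have h1 := List.isChain_split.1 hch
    have h2 := List.isChain_split (l₁ := x :: q₁) |>.1 h1.2
    have := hmin (p ++ x :: q₂) (List.isChain_split.2 ⟨h1.1, h2.2⟩)
      (by intro w hw; apply hX; simp at hw ⊢; tauto)
      (by cases p <;> simpa using hhd) (by simpa [List.getLast?_cons, List.getLast?_append] using hlast)
    simp at this
    omega
  obtain ⟨I, -, hI, hc⟩ := exists_indep_of_noShortcut r hr l hnd hns
  refine ⟨l.toFinset, ⟨l, hnd, hch, by simp, hhd, hlast⟩, by simpa using hX, ?_⟩
  rw [List.toFinset_card_of_nodup hnd]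
  exact hc.trans (Nat.mul_le_mul_left 2 (hα I hI))

lemma isPathOn_image [DecidableEq V] {r : V → V → Prop} {f : ℕ → V} {n : ℕ}
    (hinj : Set.InjOn f (Set.Iic n)) (hf : ∀ i < n, r (f i) (f (i + 1)))
    {i j : ℕ} (hij : i ≤ j) (hj : j ≤ n) :
    IsPathOn r (f i) (f j) ((Finset.Icc i j).image f) := by
  induction j, hij using Nat.le_induction with
  | base => simpa using IsPathOn.singleton r (f i)
  | succ j hij ih =>
    have := (ih (by omega)).append (IsPathOn.singleton r (f (j + 1))) ?_ (hf j (by omega))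
    · convert this using 1
      rw [← Finset.insert_Icc_right_eq_Icc_add_one (by omega), Finset.image_insert]
      grind
    · simp only [Finset.disjoint_singleton_right, Finset.mem_image, Finset.mem_Icc, not_exists,
        not_and]
      intro k hk hkj
      have := hinj (show k ≤ n by omega) (show j + 1 ≤ n by omega) hkj
      omega

lemma IsPathOn.exists_fun [DecidableEq V] {r : V → V → Prop} {a b : V} {A : Finset V}
    (h : IsPathOn r a b A) :
    ∃ (f : ℕ → V) (n : ℕ), Set.InjOn f (Set.Iic n) ∧ (∀ i < n, r (f i) (f (i + 1))) ∧
      f 0 = a ∧ f n = b ∧ A = (Finset.Icc 0 n).image f := by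
  obtain ⟨l, h1, h2, h3, h4, h5⟩ := h
  have hpos : 0 < l.length := by
    cases l
    · simp at h4
    · simp
  refine ⟨fun i => l.getD i a, l.length - 1, ?_, ?_, ?_, ?_, ?_⟩
  · intro i hi j hj hij
    simp only [Set.mem_Iic] at hi hj
    simp only [List.getD_eq_getElem _ _ (show i < l.length by omega),
      List.getD_eq_getElem _ _ (show j < l.length by omega)] at hij
    exact (h1.getElem_inj_iff).1 hij
  · intro i hi
    simp only [List.getD_eq_getElem _ _ (show i < l.length by omega),
      List.getD_eq_getElem _ _ (show i + 1 < l.length by omega)]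
    exact List.isChain_iff_getElem.1 h2 i (by omega)
  · cases l <;> simp_all
  · rw [List.getLast?_eq_getElem?] at h5
    simp [List.getD_eq_getElem?_getD, h5]
  · ext x
    rw [← h3]
    simp only [Finset.mem_image, Finset.mem_Icc]
    constructor
    · intro hx
      obtain ⟨i, hi, rfl⟩ := List.getElem_of_mem hx
      exact ⟨i, by omega, List.getD_eq_getElem _ _ hi⟩
    · rintro ⟨i, hi, rfl⟩
      rw [List.getD_eq_getElem _ _ (show i < l.length by omega)]
      exact List.getElem_mem _

/-- `A` has no partition into two nonempty parts without `r`-edges from the first to the second. -/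
def Unsplit (r : V → V → Prop) (A : Finset V) : Prop :=
  ∀ X ⊆ A, X.Nonempty → (∃ y ∈ A, y ∉ X) → ∃ x ∈ X, ∃ y ∈ A, y ∉ X ∧ r x y

lemma Unsplit.reflTransGen {r : V → V → Prop} {A : Finset V} (h : Unsplit r A) {a b : V}
    (ha : a ∈ A) (hb : b ∈ A) :
    Relation.ReflTransGen (fun x y => x ∈ (A : Set V) ∧ y ∈ (A : Set V) ∧ r x y) a b := by
  classical
  by_contra hab
  obtain ⟨x, hx, y, hy, hyX, hxy⟩ := h
    (A.filter (Relation.ReflTransGen (fun x y => x ∈ (A : Set V) ∧ y ∈ (A : Set V) ∧ r x y) a))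
    (Finset.filter_subset _ _) ⟨a, by simp [ha, Relation.ReflTransGen.refl]⟩
    ⟨b, hb, by simp_all⟩
  rw [Finset.mem_filter] at hx hyX
  exact hyX ⟨hy, hx.2.tail ⟨hx.1, hy, hxy⟩⟩

/-- The Chvátal–Erdős theorem, in the form for Hamilton paths with prescribed ends. -/
theorem isPathOn_of_unsplit [DecidableEq V] {r : V → V → Prop} (hs : ∀ x y, r x y → r y x)
    (hr : ∀ x, ¬ r x x) {α : ℕ}
    (hα : ∀ I : Finset V, (∀ x ∈ I, ∀ y ∈ I, ¬ r x y) → I.card ≤ α)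
    {A : Finset V} (hA : ∀ S : Finset V, S.card ≤ α → Unsplit r (A \ S))
    {a b : V} (ha : a ∈ A) (hb : b ∈ A) (hab : a ≠ b) : IsPathOn r a b A := by
  classical
  have hα' : ∀ I : Finset V, (∀ x ∈ I, ∀ y ∈ I, ¬ (r x y ∧ r y x)) → I.card ≤ α :=
    fun I hI => hα I fun x hx y hy h => hI x hx y hy ⟨h, hs _ _ h⟩
  obtain ⟨M₀, hM₀, hM₀A, -⟩ := exists_isPathOn_card_le r hr α hα' A a b ha
    (Unsplit.reflTransGen (by simpa using hA ∅ (by simp)) ha hb)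
  obtain ⟨P, hP, hmax⟩ := Finset.exists_max_image
    (A.powerset.filter fun P => IsPathOn r a b P) Finset.card
    ⟨M₀, by simpa [hM₀] using (show M₀ ⊆ A from fun x hx => hM₀A x hx)⟩
  rw [Finset.mem_filter, Finset.mem_powerset] at hP
  obtain ⟨hPA, hP⟩ := hP
  have hno : ∀ Q, IsPathOn r a b Q → Q ⊆ A → P ⊆ Q → Q ⊆ P := fun Q h1 h2 h3 =>
    (Finset.eq_of_subset_of_card_le h3 (hmax Q (by simp [h1, h2]))).symm.subset
  by_contra hcon
  obtain ⟨v, hvA, hvP⟩ : ∃ v ∈ A, v ∉ P := by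
    by_contra! h
    exact hcon (hPA.antisymm h ▸ hP)
  obtain ⟨f, n, hinj, hf, hf0, hfn, hPf⟩ := hP.exists_fun
  have hfP : ∀ i ≤ n, f i ∈ P := fun i hi => by
    rw [hPf]; exact Finset.mem_image_of_mem _ (by simp [hi])
  set R : V → V → Prop := fun x y => x ∈ ((A \ P : Finset V) : Set V) ∧
    y ∈ ((A \ P : Finset V) : Set V) ∧ r x y with hR
  set D := (A \ P).filter (Relation.ReflTransGen R v) with hD
  have hvD : v ∈ D := by simp [hD, hvA, hvP, Relation.ReflTransGen.refl]
  have hDAP : ∀ d ∈ D, d ∈ A \ P := fun d hd => (Finset.mem_filter.1 hd).1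
  have hDcl : ∀ d ∈ D, ∀ y ∈ A \ P, r d y → y ∈ D := fun d hd y hy hdy =>
    Finset.mem_filter.2 ⟨hy, (Finset.mem_filter.1 hd).2.tail ⟨hDAP d hd, hy, hdy⟩⟩
  have hDpath : ∀ d ∈ D, ∀ e ∈ D, ∃ M, IsPathOn r d e M ∧ M ⊆ A ∧ Disjoint M P := by
    intro d hd e he
    have : Std.Symm R := ⟨fun x y h => ⟨h.2.1, h.1, hs _ _ h.2.2⟩⟩
    have h1 : Relation.ReflTransGen R d v :=
      Std.Symm.symm (r := Relation.ReflTransGen R) _ _ (Finset.mem_filter.1 hd).2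
    obtain ⟨M, hM, hMX, -⟩ := exists_isPathOn_card_le r hr α hα' _ d e (hDAP d hd)
      (h1.trans (Finset.mem_filter.1 he).2)
    refine ⟨M, hM, fun x hx => ?_, Finset.disjoint_left.2 fun x hx => ?_⟩
    · exact (Finset.mem_sdiff.1 (hMX x hx)).1
    · exact (Finset.mem_sdiff.1 (hMX x hx)).2
  have hseg : ∀ i j, i ≤ j → j ≤ n → IsPathOn r (f i) (f j) ((Finset.Icc i j).image f) :=
    fun i j => isPathOn_image hinj hf
  have hsegP : ∀ i j, j ≤ n → (Finset.Icc i j).image f ⊆ P := fun i j hj => by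
    rw [hPf]
    exact Finset.image_subset_image (Finset.Icc_subset_Icc (by omega) hj)
  have hsegdisj : ∀ i j k l, j ≤ n → l ≤ n → j < k →
      Disjoint ((Finset.Icc i j).image f) ((Finset.Icc k l).image f) := by
    intro i j k l hj hl hjk
    rw [Finset.disjoint_left]
    simp only [Finset.mem_image, Finset.mem_Icc]
    rintro _ ⟨x, hx, rfl⟩ ⟨y, hy, hxy⟩
    have := hinj (show y ≤ n by omega) (show x ≤ n by omega) hxy
    omega
  have hins : ∀ i < n, ∀ d ∈ D, ∀ e ∈ D, r (f i) d → r e (f (i + 1)) → False := by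
    intro i hi d hd e he h1 h2
    obtain ⟨M, hM, hMA, hMP⟩ := hDpath d hd e he
    have hQ := ((hseg 0 i (by omega) hi.le).append hM
      (hMP.symm.mono_left (hsegP _ _ hi.le)) h1).append (hseg (i + 1) n hi le_rfl)
      (Finset.disjoint_union_left.2 ⟨hsegdisj _ _ _ _ hi.le le_rfl (by omega),
        hMP.mono_right (hsegP _ _ le_rfl)⟩) h2
    rw [hf0, hfn] at hQ
    refine (Finset.mem_sdiff.1 (hDAP d hd)).2 (hno _ hQ ?_ ?_ ?_)
    · exact Finset.union_subset (Finset.union_subset ((hsegP _ _ hi.le).trans hPA) hMA)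
        ((hsegP _ _ le_rfl).trans hPA)
    · rw [hPf]
      intro x hx
      simp only [Finset.mem_union, Finset.mem_image, Finset.mem_Icc] at hx ⊢
      obtain ⟨k, hk, rfl⟩ := hx
      rcases le_or_gt k i with h | h
      · exact Or.inl (Or.inl ⟨k, by omega, rfl⟩)
      · exact Or.inr ⟨k, by omega, rfl⟩
    · simp [hM.left_mem]
  set N := P.filter (fun x => ∃ d ∈ D, r x d) with hN
  have hn : 0 < n := by
    rcases Nat.eq_zero_or_pos n with rfl | h
    · exact absurd (hf0.symm.trans hfn) hab
    · exact h
  have hPN : ∃ y ∈ P, y ∉ N := by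
    by_contra! h
    obtain ⟨-, d, hd, h1⟩ := Finset.mem_filter.1 (h _ (hfP 0 (by omega)))
    obtain ⟨-, e, he, h2⟩ := Finset.mem_filter.1 (h _ (hfP 1 (by omega)))
    exact hins 0 hn d hd e he h1 (hs _ _ h2)
  have hNcard : α < N.card := by
    by_contra! hle
    obtain ⟨y₀, hy₀, hy₀N⟩ := hPN
    obtain ⟨x, hx, y, hy, hyD, hxy⟩ := hA N hle D
      (fun d hd => by
        have := hDAP d hd
        simp only [Finset.mem_sdiff, hN, Finset.mem_filter] at this ⊢
        tauto)
      ⟨v, hvD⟩ ⟨y₀, Finset.mem_sdiff.2 ⟨hPA hy₀, hy₀N⟩,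
        fun h => (Finset.mem_sdiff.1 (hDAP _ h)).2 hy₀⟩
    rw [Finset.mem_sdiff] at hy
    by_cases hyP : y ∈ P
    · exact hy.2 (Finset.mem_filter.2 ⟨hyP, x, hx, hs _ _ hxy⟩)
    · exact hyD (hDcl x hx y (Finset.mem_sdiff.2 ⟨hy.1, hyP⟩) hxy)
  set I := (Finset.range n).filter (fun i => f i ∈ N) with hI
  have hIcard : α ≤ I.card := by
    have h1 : N ⊆ insert (f n) (I.image f) := by
      intro x hx
      have hxP := (Finset.mem_filter.1 hx).1
      rw [hPf] at hxP
      obtain ⟨k, hk, rfl⟩ := Finset.mem_image.1 hxP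
      rw [Finset.mem_Icc] at hk
      rcases hk.2.eq_or_lt with rfl | hkn
      · simp
      · exact Finset.mem_insert_of_mem (Finset.mem_image_of_mem _ (by simp [hI, hkn, hx]))
    have h2 := (Finset.card_le_card h1).trans (Finset.card_insert_le _ _)
    have h3 : (I.image f).card ≤ I.card := Finset.card_image_le
    omega
  have hIn : ∀ i ∈ I, i < n ∧ ∃ d ∈ D, r (f i) d := fun i hi => by
    simp only [hI, Finset.mem_filter, Finset.mem_range, hN] at hi
    exact ⟨hi.1, hi.2.2⟩
  have hJcard : (insert v (I.image fun i => f (i + 1))).card = I.card + 1 := by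
    rw [Finset.card_insert_of_notMem, Finset.card_image_of_injOn]
    · intro i hi j hj hij
      have h1 := (hIn i hi).1
      have h2 := (hIn j hj).1
      have := hinj (show i + 1 ≤ n by omega) (show j + 1 ≤ n by omega) hij
      omega
    · intro h
      obtain ⟨i, hi, rfl⟩ := Finset.mem_image.1 h
      exact hvP (hfP _ (hIn i hi).1)
  have hcross : ∀ i ∈ I, ∀ j ∈ I, i < j → ¬ r (f (i + 1)) (f (j + 1)) := by
    intro i hi j hj hij h
    obtain ⟨hin, d, hd, h1⟩ := hIn i hi
    obtain ⟨hjn, e, he, h2⟩ := hIn j hj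
    obtain ⟨M, hM, hMA, hMP⟩ := hDpath d hd e he
    have hQ := (((hseg 0 i (by omega) hin.le).append hM
      (hMP.symm.mono_left (hsegP _ _ hin.le)) h1).append
      ((hseg (i + 1) j hij hjn.le).reverse hs)
      (Finset.disjoint_union_left.2 ⟨hsegdisj _ _ _ _ hin.le hjn.le (by omega),
        hMP.mono_right (hsegP _ _ hjn.le)⟩) (hs _ _ h2)).append (hseg (j + 1) n hjn le_rfl)
      (Finset.disjoint_union_left.2 ⟨Finset.disjoint_union_left.2
        ⟨hsegdisj _ _ _ _ hin.le le_rfl (by omega), hMP.mono_right (hsegP _ _ le_rfl)⟩,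
        hsegdisj _ _ _ _ hjn.le le_rfl (by omega)⟩) h
    rw [hf0, hfn] at hQ
    refine (Finset.mem_sdiff.1 (hDAP d hd)).2 (hno _ hQ ?_ ?_ ?_)
    · exact Finset.union_subset (Finset.union_subset (Finset.union_subset
        ((hsegP _ _ hin.le).trans hPA) hMA) ((hsegP _ _ hjn.le).trans hPA))
        ((hsegP _ _ le_rfl).trans hPA)
    · rw [hPf]
      intro x hx
      simp only [Finset.mem_union, Finset.mem_image, Finset.mem_Icc] at hx ⊢
      obtain ⟨k, hk, rfl⟩ := hx
      rcases le_or_gt k i with h | h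
      · exact Or.inl (Or.inl (Or.inl ⟨k, by omega, rfl⟩))
      · rcases le_or_gt k j with h' | h'
        · exact Or.inl (Or.inr ⟨k, by omega, rfl⟩)
        · exact Or.inr ⟨k, by omega, rfl⟩
    · simp [hM.left_mem]
  have hJ := hα (insert v (I.image fun i => f (i + 1))) (by
    have hvi : ∀ i ∈ I, ¬ r v (f (i + 1)) := fun i hi h => by
      obtain ⟨hin, d, hd, h1⟩ := hIn i hi
      exact hins i hin d hd v hvD h1 h
    intro x hx y hy hxy
    simp only [Finset.mem_insert, Finset.mem_image] at hx hy
    rcases hx with rfl | ⟨i, hi, rfl⟩ <;> rcases hy with rfl | ⟨j, hj, rfl⟩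
    · exact hr _ hxy
    · exact hvi j hj hxy
    · exact hvi i hi (hs _ _ hxy)
    · rcases lt_trichotomy i j with h | rfl | h
      · exact hcross i hi j hj h hxy
      · exact hr _ hxy
      · exact hcross j hj i hi h (hs _ _ hxy))
  omega

/-- Gallai–Milgram for symmetric relations. -/
lemma exists_path_partition [Fintype V] [DecidableEq V] {r : V → V → Prop}
    (hs : ∀ x y, r x y → r y x) (hr : ∀ x, ¬ r x x) {α : ℕ}
    (hα : ∀ I : Finset V, (∀ x ∈ I, ∀ y ∈ I, ¬ r x y) → I.card ≤ α) (W : Finset V) :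
    ∃ Q : Finset (Finset V), Q.card ≤ α ∧ (Q : Set (Finset V)).PairwiseDisjoint id ∧
      Q.biUnion id = W ∧ ∀ A ∈ Q, ∃ a b, IsPathOn r a b A := by
  classical
  obtain ⟨Q, hQ, hmin⟩ := Finset.exists_min_image
    ((Finset.univ : Finset (Finset (Finset V))).filter fun Q : Finset (Finset V) =>
      (Q : Set (Finset V)).PairwiseDisjoint id ∧ Q.biUnion id = W ∧
        ∀ A ∈ Q, ∃ a b, IsPathOn r a b A) Finset.card
    ⟨W.image fun x => {x}, by
      simp only [Finset.mem_filter, Finset.mem_univ, true_and]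
      refine ⟨?_, ?_, ?_⟩
      · intro A hA B hB hAB
        simp only [Finset.coe_image, Set.mem_image] at hA hB
        obtain ⟨x, -, rfl⟩ := hA
        obtain ⟨y, -, rfl⟩ := hB
        simpa [Function.onFun] using fun h : x = y => hAB (by rw [h])
      · ext x; simp
      · intro A hA
        obtain ⟨x, -, rfl⟩ := Finset.mem_image.1 hA
        exact ⟨x, x, IsPathOn.singleton r x⟩⟩
  simp only [Finset.mem_filter, Finset.mem_univ, true_and] at hQ hmin
  obtain ⟨hdisj, hU, hpath⟩ := hQ
  refine ⟨Q, ?_, hdisj, hU, hpath⟩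
  rcases Q.eq_empty_or_nonempty with rfl | ⟨A₀, hA₀⟩
  · simp
  have hpath' : ∀ A : Finset V, ∃ a, A ∈ Q → ∃ b, IsPathOn r a b A := fun A => by
    by_cases hA : A ∈ Q
    · obtain ⟨a, b, h⟩ := hpath A hA
      exact ⟨a, fun _ => ⟨b, h⟩⟩
    · exact ⟨(hpath A₀ hA₀).choose, fun h => absurd h hA⟩
  choose a ha using hpath'
  have hmem : ∀ A ∈ Q, a A ∈ A := fun A hA => (ha A hA).elim fun b h => h.left_mem
  rw [← Finset.card_image_of_injOn (f := a) (s := Q)]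
  · apply hα
    intro x hx y hy hxy
    obtain ⟨A, hA, rfl⟩ := Finset.mem_image.1 hx
    obtain ⟨B, hB, rfl⟩ := Finset.mem_image.1 hy
    have hAB : A ≠ B := fun h => hr _ (h ▸ hxy)
    obtain ⟨c, hc⟩ := ha A hA
    obtain ⟨d, hd⟩ := ha B hB
    have hABd : Disjoint A B := hdisj hA hB hAB
    have hnew := (hc.reverse hs).append hd hABd hxy
    have := hmin (insert (A ∪ B) ((Q.erase A).erase B)) ⟨?_, ?_, ?_⟩
    · have h1 := Finset.card_insert_le (A ∪ B) ((Q.erase A).erase B)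
      have h2 : B ∈ Q.erase A := Finset.mem_erase.2 ⟨hAB.symm, hB⟩
      have h3 := Finset.card_erase_add_one h2
      have h4 := Finset.card_erase_add_one hA
      omega
    · rw [Finset.coe_insert, Set.pairwiseDisjoint_insert]
      refine ⟨hdisj.subset fun C hC => ?_, fun C hC _ => ?_⟩
      · simp at hC; exact hC.1.1
      · simp only [Finset.coe_erase, Set.mem_sdiff, Finset.mem_coe, Set.mem_singleton_iff] at hC
        exact Finset.disjoint_union_left.2
          ⟨hdisj hA hC.1.1 (Ne.symm hC.1.2), hdisj hB hC.1.1 (Ne.symm hC.2)⟩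
    · rw [← hU]
      ext x
      simp only [Finset.mem_biUnion, Finset.mem_insert, Finset.mem_erase, id]
      constructor
      · rintro ⟨C, rfl | hC, hx⟩
        · rcases Finset.mem_union.1 hx with hx | hx
          exacts [⟨A, hA, hx⟩, ⟨B, hB, hx⟩]
        · exact ⟨C, hC.2.2, hx⟩
      · rintro ⟨C, hC, hx⟩
        by_cases h1 : C = A
        · exact ⟨_, Or.inl rfl, by simp [← h1, hx]⟩
        · by_cases h2 : C = B
          · exact ⟨_, Or.inl rfl, by simp [← h2, hx]⟩
          · exact ⟨C, Or.inr ⟨h2, h1, hC⟩, hx⟩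
    · intro C hC
      rcases Finset.mem_insert.1 hC with rfl | hC
      · exact ⟨_, _, hnew⟩
      · exact hpath C (Finset.mem_of_mem_erase (Finset.mem_of_mem_erase hC))
  · intro A hA B hB hAB
    by_contra hne
    exact Finset.disjoint_left.1 (hdisj hA hB hne) (hmem A hA) (hAB ▸ hmem B hB)

end HamPath

lemma IsPathOn.eq_singleton {V : Type*} {r : V → V → Prop} {a : V} {A : Finset V}
    (h : IsPathOn r a a A) : A = {a} := by
  classical
  rcases h.uncons with h | ⟨c, -, h⟩
  · exact h.2
  · exact absurd h.right_mem (by simp)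

/-- A vertex set splits into few pairwise nonadjacent pieces that cannot be split by deleting at
most `c` vertices, and a small remainder. -/
lemma exists_unsplit_family {V : Type*} [Fintype V] [DecidableEq V] [Nonempty V]
    {r : V → V → Prop} (hs : ∀ x y, r x y → r y x) (hr : ∀ x, ¬ r x x) {α : ℕ}
    (hα : ∀ I : Finset V, (∀ x ∈ I, ∀ y ∈ I, ¬ r x y) → I.card ≤ α) (c : ℕ) :
    ∃ F : Finset (Finset V), F.card ≤ α ∧ (∀ A ∈ F, A.Nonempty) ∧
      (F : Set (Finset V)).PairwiseDisjoint id ∧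
      (Finset.univ \ F.biUnion id).card + c ≤ c * F.card ∧
      ∀ A ∈ F, ∀ S : Finset V, S.card ≤ c → Unsplit r (A \ S) := by
  classical
  obtain ⟨F, hF, hmax⟩ := Finset.exists_max_image
    ((Finset.univ : Finset (Finset (Finset V))).filter fun F : Finset (Finset V) =>
      (∀ A ∈ F, A.Nonempty) ∧
      (∀ A ∈ F, ∀ B ∈ F, A ≠ B → Disjoint A B ∧ ∀ x ∈ A, ∀ y ∈ B, ¬ r x y) ∧
      (Finset.univ \ F.biUnion id).card + c ≤ c * F.card) Finset.card
    ⟨{Finset.univ}, by simp⟩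
  simp only [Finset.mem_filter, Finset.mem_univ, true_and] at hF hmax
  obtain ⟨hne, hdisj, hcard⟩ := hF
  refine ⟨F, ?_, hne, fun A hA B hB h => (hdisj A hA B hB h).1, hcard, ?_⟩
  · choose! a ha using hne
    rw [← Finset.card_image_of_injOn (f := a) (s := F)]
    · apply hα
      intro x hx y hy hxy
      obtain ⟨A, hA, rfl⟩ := Finset.mem_image.1 hx
      obtain ⟨B, hB, rfl⟩ := Finset.mem_image.1 hy
      by_cases hAB : A = B
      · exact hr _ (hAB ▸ hxy)
      · exact (hdisj A hA B hB hAB).2 _ (ha A hA) _ (ha B hB) hxy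
    · intro A hA B hB hAB
      by_contra h
      exact Finset.disjoint_left.1 (hdisj A hA B hB h).1 (ha A hA) (hAB ▸ ha B hB)
  · intro A hA S hS
    by_contra hcon
    simp only [Unsplit] at hcon
    push Not at hcon
    obtain ⟨X, hXA, hX, ⟨y, hy, hyX⟩, hXY⟩ := hcon
    set Y := (A \ S) \ X with hY
    have hYne : Y.Nonempty := ⟨y, Finset.mem_sdiff.2 ⟨hy, hyX⟩⟩
    have hXA' : X ⊆ A := hXA.trans Finset.sdiff_subset
    have hYA' : Y ⊆ A := Finset.sdiff_subset.trans Finset.sdiff_subset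
    have hnot : ∀ Z ⊆ A, Z.Nonempty → Z ∉ F.erase A := by
      rintro Z hZA ⟨z, hz⟩ hZ
      rw [Finset.mem_erase] at hZ
      exact Finset.disjoint_left.1 (hdisj Z hZ.2 A hA hZ.1).1 hz (hZA hz)
    have hXYne : X ≠ Y := by
      rintro h
      obtain ⟨x, hx⟩ := hX
      exact (Finset.mem_sdiff.1 (h ▸ hx : x ∈ Y)).2 hx
    have hXYd : Disjoint X Y := Finset.disjoint_sdiff
    have hXYr : ∀ x ∈ X, ∀ y ∈ Y, ¬ r x y := fun x hx y hy =>
      hXY x hx y (Finset.mem_sdiff.1 hy).1 (Finset.mem_sdiff.1 hy).2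
    have hold : ∀ Z ⊆ A, ∀ B ∈ F.erase A, Disjoint Z B ∧ ∀ x ∈ Z, ∀ y ∈ B, ¬ r x y := by
      intro Z hZ B hB
      rw [Finset.mem_erase] at hB
      have := hdisj A hA B hB.2 hB.1.symm
      exact ⟨this.1.mono_left hZ, fun x hx y hy => this.2 x (hZ hx) y hy⟩
    have hsym : ∀ Z B : Finset V, (Disjoint Z B ∧ ∀ x ∈ Z, ∀ y ∈ B, ¬ r x y) →
        (Disjoint B Z ∧ ∀ x ∈ B, ∀ y ∈ Z, ¬ r x y) := fun Z B h =>
      ⟨h.1.symm, fun x hx y hy hxy => h.2 y hy x hx (hs _ _ hxy)⟩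
    have hcard' : (insert X (insert Y (F.erase A))).card = F.card + 1 := by
      have := Finset.card_erase_add_one hA
      rw [Finset.card_insert_of_notMem, Finset.card_insert_of_notMem (hnot Y hYA' hYne)]
      · omega
      · rw [Finset.mem_insert, not_or]
        exact ⟨hXYne, hnot X hXA' hX⟩
    have := hmax (insert X (insert Y (F.erase A))) ⟨?_, ?_, ?_⟩
    · omega
    · intro B hB
      rcases Finset.mem_insert.1 hB with rfl | hB
      · exact hX
      rcases Finset.mem_insert.1 hB with rfl | hB
      · exact hYne
      · exact hne B (Finset.mem_of_mem_erase hB)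
    · intro B hB C hC hBC
      rw [Finset.mem_insert, Finset.mem_insert] at hB hC
      rcases hB with rfl | rfl | hB <;> rcases hC with rfl | rfl | hC
      · exact absurd rfl hBC
      · exact ⟨hXYd, hXYr⟩
      · exact hold _ hXA' _ hC
      · exact hsym _ _ ⟨hXYd, hXYr⟩
      · exact absurd rfl hBC
      · exact hold _ hYA' _ hC
      · exact hsym _ _ (hold _ hXA' _ hB)
      · exact hsym _ _ (hold _ hYA' _ hB)
      · exact hdisj _ (Finset.mem_of_mem_erase hB) _ (Finset.mem_of_mem_erase hC) hBC
    · have hsub : Finset.univ \ (insert X (insert Y (F.erase A))).biUnion id ⊆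
          (Finset.univ \ F.biUnion id) ∪ S := by
        intro x hx
        simp only [Finset.mem_sdiff, Finset.mem_univ, true_and, Finset.mem_biUnion,
          Finset.mem_union, Finset.mem_insert, Finset.mem_erase, id, not_exists, not_and] at hx ⊢
        by_contra! h
        obtain ⟨⟨B, hB, hxB⟩, hxS⟩ := h
        by_cases hBA : B = A
        · subst hBA
          have h1 := hx X (Or.inl rfl)
          have h2 := hx Y (Or.inr (Or.inl rfl))
          simp [hY, hxB, hxS] at h2
          exact h1 h2
        · exact hx B (Or.inr (Or.inr ⟨hBA, hB⟩)) hxB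
      have h1 := (Finset.card_le_card hsub).trans (Finset.card_union_le _ _)
      rw [hcard', mul_add_one]
      omega

/-- The vertices split into few parts, each of which has a Hamilton path with fixed ends even after
deleting few vertices outside a small core. -/
lemma exists_robust_parts {V : Type*} [Fintype V] [DecidableEq V] [Nonempty V]
    {r : V → V → Prop} (hs : ∀ x y, r x y → r y x) (hr : ∀ x, ¬ r x x) {α : ℕ}
    (hα : ∀ I : Finset V, (∀ x ∈ I, ∀ y ∈ I, ¬ r x y) → I.card ≤ α) (d : ℕ) :
    ∃ (P : Finset (Finset V)) (core : Finset V → Finset V) (a b : Finset V → V),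
      P.card ≤ 2 * α ∧ (P : Set (Finset V)).PairwiseDisjoint id ∧
      P.biUnion id = Finset.univ ∧
      (P.biUnion core).card + (d + α) ≤ (d + α) * α + 2 * α ∧
      ∀ Q ∈ P, a Q ∈ core Q ∧ b Q ∈ core Q ∧ core Q ⊆ Q ∧
        ∀ D : Finset V, Disjoint D (core Q) → D.card ≤ d → IsPathOn r (a Q) (b Q) (Q \ D) := by
  classical
  obtain ⟨F, hFα, hFne, hFd, hFc, hFu⟩ := exists_unsplit_family hs hr hα (d + α)
  set W := Finset.univ \ F.biUnion id with hW
  obtain ⟨Q, hQα, hQd, hQW, hQp⟩ := exists_path_partition hs hr hα W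
  have hcores : ∀ A ∈ F ∪ Q, ∃ (core : Finset V) (a b : V), (a ∈ core ∧ b ∈ core ∧ core ⊆ A ∧
      ∀ D : Finset V, Disjoint D core → D.card ≤ d → IsPathOn r a b (A \ D)) ∧
      (A ∈ F → core.card ≤ 2) := by
    intro A hA
    by_cases hAF : A ∈ F
    · rcases (Finset.one_le_card.2 (hFne A hAF)).eq_or_lt with h1 | h1
      · obtain ⟨a, rfl⟩ := Finset.card_eq_one.1 h1.symm
        refine ⟨{a}, a, a, ⟨by simp, by simp, le_rfl, fun D hD _ => ?_⟩, by simp⟩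
        rw [Finset.sdiff_eq_self_of_disjoint hD.symm]
        exact IsPathOn.singleton r a
      · obtain ⟨a, ha, b, hb, hab⟩ := Finset.one_lt_card.1 h1
        refine ⟨{a, b}, a, b, ⟨by simp, by simp, by simp [Finset.insert_subset_iff, ha, hb],
          fun D hD hDc => ?_⟩, fun _ => Finset.card_le_two⟩
        simp only [Finset.disjoint_insert_right, Finset.disjoint_singleton_right] at hD
        refine isPathOn_of_unsplit hs hr hα (fun S hS => ?_)
          (Finset.mem_sdiff.2 ⟨ha, hD.1⟩) (Finset.mem_sdiff.2 ⟨hb, hD.2⟩) hab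
        rw [sdiff_sdiff]
        exact hFu A hAF _ ((Finset.card_union_le _ _).trans (by omega))
    · obtain ⟨a, b, h⟩ := hQp A ((Finset.mem_union.1 hA).resolve_left hAF)
      refine ⟨A, a, b, ⟨h.left_mem, h.right_mem, le_rfl, fun D hD _ => ?_⟩,
        fun h => absurd h hAF⟩
      rwa [Finset.sdiff_eq_self_of_disjoint hD.symm]
  choose! core a b hcore using hcores
  have hQsub : ∀ A ∈ Q, A ⊆ W := fun A hA => hQW ▸ Finset.subset_biUnion_of_mem id hA
  have hFW : ∀ A ∈ F, Disjoint A W := fun A hA =>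
    (Finset.disjoint_sdiff (s := F.biUnion id)).mono_left (Finset.subset_biUnion_of_mem id hA)
  refine ⟨F ∪ Q, core, a, b, (Finset.card_union_le _ _).trans (by omega), ?_, ?_, ?_,
    fun A hA => (hcore A hA).1⟩
  · rw [Finset.coe_union, Set.pairwiseDisjoint_union]
    exact ⟨hFd, hQd, fun A hA B hB _ => (hFW A hA).mono_right (hQsub B hB)⟩
  · rw [Finset.union_biUnion, hQW, hW]
    simp
  · have hsub : (F ∪ Q).biUnion core ⊆ W ∪ F.biUnion core := by
      rw [Finset.union_biUnion, Finset.union_comm]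
      refine Finset.union_subset_union (Finset.biUnion_subset.2 fun A hA => ?_) le_rfl
      exact (hcore A (Finset.mem_union_right _ hA)).1.2.2.1.trans (hQsub A hA)
    have h1 := (Finset.card_le_card hsub).trans (Finset.card_union_le _ _)
    have h2 := Finset.card_biUnion_le_card_mul F core 2
      fun A hA => (hcore A (Finset.mem_union_left _ hA)).2 hA
    have h3 := Nat.mul_le_mul_left (d + α) hFα
    omega

/-- If any two vertices are joined by a short path avoiding a prescribed small set, then any two
vertices are joined by few connecting vertices together with prescribed disjoint paths whose ends
are `a i` and `b i`. The connecting vertices depend only on the ends. -/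
lemma exists_connecting_set {V ι : Type*} [DecidableEq V] {r : V → V → Prop} {k q : ℕ}
    (hlink : ∀ (S : Finset V) (x y : V), S.card < k → x ∉ S → y ∉ S →
      ∃ M : Finset V, IsPathOn r x y M ∧ Disjoint M S ∧ M.card ≤ q)
    (a b : ι → V) (T : Finset ι)
    (hab : ∀ i ∈ T, ∀ j ∈ T, i ≠ j → a i ≠ a j ∧ a i ≠ b j ∧ b i ≠ b j) (u z : V) (S : Finset V)
    (huz : u ≠ z) (hu : u ∉ S) (hz : z ∉ S) (hS : ∀ i ∈ T, a i ∈ S ∧ b i ∈ S)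
    (hk : S.card + T.card * q < k) :
    ∃ D : Finset V, Disjoint D S ∧ u ∉ D ∧ z ∉ D ∧ D.card ≤ (T.card + 1) * q ∧
      ∀ B : ι → Finset V,
        (∀ i ∈ T, IsPathOn r (a i) (b i) (B i) ∧ Disjoint (B i) D ∧ u ∉ B i ∧ z ∉ B i) →
        (T : Set ι).PairwiseDisjoint B →
        IsPathOn r u z (insert u (insert z (D ∪ T.biUnion B))) := by
  classical
  induction T using Finset.induction_on generalizing u S with
  | empty =>
    obtain ⟨M, hM, hMS, hMq⟩ := hlink S u z (by simpa using hk) hu hz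
    refine ⟨M \ {u, z}, hMS.mono_left Finset.sdiff_subset, by simp, by simp, ?_, fun B _ _ => ?_⟩
    · exact (Finset.card_le_card Finset.sdiff_subset).trans (by simpa using hMq)
    · convert hM using 1
      ext x
      have h1 := hM.left_mem
      have h2 := hM.right_mem
      simp only [Finset.biUnion_empty, Finset.union_empty, Finset.mem_insert, Finset.mem_sdiff,
        Finset.mem_singleton]
      grind
  | insert i T hiT ih =>
    rw [Finset.card_insert_of_notMem hiT] at hk ⊢
    obtain ⟨haS, hbS⟩ := hS i (by simp)
    have hau : u ≠ a i := fun h => hu (h ▸ haS)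
    have hbu : u ≠ b i := fun h => hu (h ▸ hbS)
    have haz : z ≠ a i := fun h => hz (h ▸ haS)
    have hbz : z ≠ b i := fun h => hz (h ▸ hbS)
    have hk' : S.card + T.card * q + q < k := by linarith
    obtain ⟨M, hM, hMS, hMq⟩ := hlink (insert z (S.erase (a i))) u (a i)
      (by
        have h1 := Finset.card_insert_le z (S.erase (a i))
        have h2 := Finset.card_erase_add_one haS
        omega)
      (by simp [huz, hu]) (by simp [haz.symm])
    rw [Finset.disjoint_insert_right] at hMS
    set M₀ := M \ {u, a i} with hM₀
    have hMeq : M = insert u (insert (a i) M₀) := by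
      ext x
      have h1 := hM.left_mem
      have h2 := hM.right_mem
      simp only [hM₀, Finset.mem_insert, Finset.mem_sdiff, Finset.mem_singleton]
      grind
    have hM₀q : M₀.card ≤ q := (Finset.card_le_card Finset.sdiff_subset).trans hMq
    have hM₀S : ∀ x ∈ M₀, x ∉ S := by
      intro x hx hxS
      simp only [hM₀, Finset.mem_sdiff, Finset.mem_insert, Finset.mem_singleton, not_or] at hx
      exact Finset.disjoint_left.1 hMS.2 hx.1 (Finset.mem_erase.2 ⟨hx.2.2, hxS⟩)
    have hM₀z : z ∉ M₀ := fun h => hMS.1 (Finset.mem_sdiff.1 h).1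
    have hM₀b : b i ∉ M₀ := fun h => hM₀S _ h hbS
    obtain ⟨D, hDS, hDb, hDz, hDq, hD⟩ := ih
      (fun j hj l hl => hab j (Finset.mem_insert_of_mem hj) l (Finset.mem_insert_of_mem hl))
      (b i) (insert u (S.erase (b i)) ∪ M₀) hbz.symm
      (by simp [hbu.symm, hM₀b]) (by simp [huz.symm, hz, hM₀z])
      (fun j hj => by
        have h1 := hS j (Finset.mem_insert_of_mem hj)
        have hij : i ≠ j := fun h => hiT (h ▸ hj)
        have h2 := hab i (by simp) j (Finset.mem_insert_of_mem hj) hij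
        have h3 := hab j (Finset.mem_insert_of_mem hj) i (by simp) hij.symm
        simp [h1.1, h1.2, h2.2.2.symm, h3.2.1])
      (by
        have h1 := Finset.card_union_le (insert u (S.erase (b i))) M₀
        have h2 := Finset.card_insert_le u (S.erase (b i))
        have h3 := Finset.card_erase_add_one hbS
        omega)
    rw [Finset.disjoint_union_right, Finset.disjoint_insert_right] at hDS
    obtain ⟨⟨hDu, hDS⟩, hDM⟩ := hDS
    have hDS' : ∀ x ∈ D, x ∉ S := fun x hx hxS =>
      Finset.disjoint_left.1 hDS hx (Finset.mem_erase.2 ⟨fun h => hDb (h ▸ hx), hxS⟩)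
    refine ⟨M₀ ∪ D, ?_, by simp [hM₀, hDu], by simp [hM₀z, hDz], ?_, ?_⟩
    · exact Finset.disjoint_left.2 fun x hx => (Finset.mem_union.1 hx).elim (hM₀S x) (hDS' x)
    · refine (Finset.card_union_le _ _).trans ?_
      linarith
    · intro B hB hBd
      obtain ⟨hBi, hBiD, hBiu, hBiz⟩ := hB i (by simp)
      rw [Finset.disjoint_union_right] at hBiD
      rw [Finset.coe_insert, Set.pairwiseDisjoint_insert] at hBd
      have hBd' : ∀ j ∈ T, Disjoint (B i) (B j) := fun j hj =>
        hBd.2 j hj fun h => hiT (h ▸ hj)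
      have hBT : ∀ j ∈ T, IsPathOn r (a j) (b j) (B j) ∧ Disjoint (B j) (M₀ ∪ D) ∧
          u ∉ B j ∧ z ∉ B j := fun j hj => hB j (Finset.mem_insert_of_mem hj)
      have h1 := hD B (fun j hj => by
        obtain ⟨h1, h2, h3, h4⟩ := hBT j hj
        exact ⟨h1, h2.mono_right Finset.subset_union_right,
          Finset.disjoint_left.1 (hBd' j hj) hBi.right_mem, h4⟩) hBd.1
      have h2 := hM.glue hBi (by
        intro x hx hxB
        rw [hMeq, Finset.mem_insert, Finset.mem_insert] at hx
        rcases hx with rfl | rfl | hx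
        · exact absurd hxB hBiu
        · rfl
        · exact absurd hx (Finset.disjoint_left.1 hBiD.1 hxB))
      have h3 := h2.glue h1 (by
        intro x hx hx'
        have hxz : x ≠ z := by
          rintro rfl
          rcases Finset.mem_union.1 hx with hx | hx
          exacts [hMS.1 hx, hBiz hx]
        rw [Finset.mem_insert, Finset.mem_insert, Finset.mem_union, Finset.mem_biUnion] at hx'
        rw [hMeq, Finset.mem_union, Finset.mem_insert, Finset.mem_insert] at hx
        rcases hx' with h | h | h | ⟨j, hj, h⟩
        · exact h
        · exact absurd h hxz
        · exfalso
          rcases hx with (rfl | rfl | hx) | hx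
          · exact hDu h
          · exact hDS' _ h haS
          · exact Finset.disjoint_left.1 hDM h hx
          · exact Finset.disjoint_left.1 hBiD.2 hx h
        · exfalso
          obtain ⟨-, h2, h3, -⟩ := hBT j hj
          rcases hx with (rfl | rfl | hx) | hx
          · exact h3 h
          · exact Finset.disjoint_left.1 (hBd' j hj) hBi.left_mem h
          · exact Finset.disjoint_left.1 h2 h (Finset.mem_union_left _ hx)
          · exact Finset.disjoint_left.1 (hBd' j hj) hx h)
      convert h3 using 1
      have h4 := hBi.left_mem
      have h5 := hBi.right_mem
      rw [hMeq, Finset.biUnion_insert]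
      ext x
      simp only [Finset.mem_insert, Finset.mem_union]
      grind

/-- A Hamilton path whose ends are joined by a closing edge gives a Hamilton cycle. -/
lemma IsPathOn.exists_isHamCycle {V : Type*} [Fintype V] {r : V → V → Prop} {a b : V}
    (h : IsPathOn r a b Finset.univ) (hba : r b a) :
    ∃ f : ZMod (Fintype.card V) → V, IsHamCycle r f := by
  classical
  obtain ⟨l, hnd, hch, hmem, hhd, hlast⟩ := h
  have hlen : l.length = Fintype.card V := by
    rw [← List.toFinset_card_of_nodup hnd, ← Finset.card_univ]
    congr 1
    ext x
    simp [hmem]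
  have : Nonempty V := ⟨a⟩
  have : NeZero (Fintype.card V) := ⟨Fintype.card_ne_zero⟩
  have hlt : ∀ i : ZMod (Fintype.card V), i.val < l.length := fun i => by
    rw [hlen]
    exact ZMod.val_lt i
  refine ⟨fun i => l[i.val]'(hlt i), ?_, ?_⟩
  · rw [Fintype.bijective_iff_injective_and_card]
    refine ⟨fun i j hij => ZMod.val_injective _ (hnd.getElem_inj_iff.1 hij), ZMod.card _⟩
  · intro i
    have hpos : 0 < l.length := (Nat.zero_le _).trans_lt (hlt i)
    have hval : (i + 1).val = (i.val + 1) % l.length := by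
      rw [ZMod.val_add, ZMod.val_one_eq_one_mod, hlen]
      simp
    rcases (Nat.succ_le_of_lt (hlt i)).lt_or_eq with h | h
    · have h1 : (i + 1).val = i.val + 1 := by rw [hval, Nat.mod_eq_of_lt h]
      simp only [h1]
      exact List.isChain_iff_getElem.1 hch i.val h
    · have h1 : (i + 1).val = 0 := by
        rw [hval, show i.val + 1 = l.length from h, Nat.mod_self]
      have h2 : l[i.val]'(hlt i) = b := by
        rw [List.getLast?_eq_getElem?] at hlast
        have h3 : l.length - 1 = i.val := by omega
        rw [h3, List.getElem?_eq_getElem (hlt i)] at hlast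
        exact Option.some_injective _ hlast
      have h4 : l[0] = a := by
        rw [List.head?_eq_getElem?, List.getElem?_eq_getElem hpos] at hhd
        exact Option.some_injective _ hhd
      simp only [h1, h2, h4]
      exact hba

lemma card_bound_lt {α : ℕ} (hα : 1 ≤ α) :
    4 * α ^ 3 + α ^ 2 + α < 2 ^ α * (α + 2).factorial := by
  induction α, hα using Nat.le_induction with
  | base => decide
  | succ n hn ih =>
    have h1 : 2 ^ (n + 1) * (n + 1 + 2).factorial =
        2 * (n + 3) * (2 ^ n * (n + 2).factorial) := by
      rw [show n + 1 + 2 = (n + 2) + 1 by ring, Nat.factorial_succ]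
      ring
    rw [h1]
    calc 4 * (n + 1) ^ 3 + (n + 1) ^ 2 + (n + 1)
        ≤ 8 * (4 * n ^ 3 + n ^ 2 + n) := by
          have h2 : n * 1 ≤ n * n := Nat.mul_le_mul_left n hn
          have h3 : n * n * 1 ≤ n * n * n := Nat.mul_le_mul_left (n * n) hn
          ring_nf at h2 h3 ⊢
          omega
      _ < 8 * (2 ^ n * (n + 2).factorial) := by omega
      _ ≤ _ := Nat.mul_le_mul_right _ (by omega)

lemma card_le_alphaTwo {V : Type*} [Fintype V] {G : V → V → Prop} (I : Finset V)
    (hI : ∀ x ∈ I, ∀ y ∈ I, ¬ (G x y ∧ G y x)) : I.card ≤ alphaTwo G := by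
  refine le_csSup ⟨Fintype.card V, ?_⟩ ⟨I, Set.ncard_coe_finset I, by simpa using hI⟩
  rintro _ ⟨S, rfl, -⟩
  rw [← Nat.card_eq_fintype_card]
  exact Set.ncard_le_card S

lemma strongOn_compl_of_lt_kappa {V : Type*} [Fintype V] {G : V → V → Prop} (S : Finset V)
    (hS : S.card < kappa G) : StrongOn G ((S : Set V)ᶜ) := by
  by_contra h
  exact Nat.notMem_of_lt_sInf hS ⟨S, Set.ncard_coe_finset S, Or.inl h⟩

lemma kappa_lt_card {V : Type*} [Fintype V] [Nonempty V] (G : V → V → Prop) :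
    kappa G < Fintype.card V := by
  obtain ⟨v⟩ := ‹Nonempty V›
  refine (Nat.sInf_le ⟨{v}ᶜ, rfl, Or.inr (by simp)⟩ : kappa G ≤ ({v}ᶜ : Set V).ncard).trans_lt ?_
  have h := Set.ncard_add_ncard_compl ({v} : Set V)
  rw [Set.ncard_singleton, Nat.card_eq_fintype_card] at h
  omega

/-- Jackson's theorem: if κ(G) ≥ 2^{α₂(G)} · (α₂(G) + 2)!, then the digraph G has a
Hamilton cycle. -/
theorem jackson_chvatal_erdos (V : Type) [Fintype V] (G : V → V → Prop)
    (hirr : Irreflexive G)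
    (hκ : 2 ^ alphaTwo G * Nat.factorial (alphaTwo G + 2) ≤ kappa G) :
    ∃ f : ZMod (Fintype.card V) → V, IsHamCycle G f := by
  classical
  set α := alphaTwo G with hα_def
  have hirr' : ∀ x, ¬ G x x := hirr
  have hα : ∀ I : Finset V, (∀ x ∈ I, ∀ y ∈ I, ¬ (G x y ∧ G y x)) → I.card ≤ α :=
    fun I hI => card_le_alphaTwo I hI
  have hV : Nonempty V := by
    by_contra h
    rw [not_nonempty_iff] at h
    have h0 : kappa G = 0 := by
      refine Nat.sInf_eq_zero.2 (Or.inr (Set.eq_empty_iff_forall_notMem.2 ?_))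
      rintro _ ⟨S, -, h1 | h1⟩
      · exact h1 fun x => (h.false x).elim
      · simp [Set.eq_empty_of_isEmpty] at h1
    have : 0 < 2 ^ α * (α + 2).factorial := by positivity
    omega
  have hα1 : 1 ≤ α := by
    obtain ⟨v⟩ := hV
    simpa using hα {v} (by simp [hirr'])
  have hbound := (card_bound_lt hα1).trans_le hκ
  have hlink : ∀ (S : Finset V) (x y : V), S.card < kappa G → x ∉ S → y ∉ S →
      ∃ M : Finset V, IsPathOn G x y M ∧ Disjoint M S ∧ M.card ≤ 2 * α := by
    intro S x y hS hx hy
    obtain ⟨M, hM, hMS, hMc⟩ := exists_isPathOn_card_le G hirr' α hα ((S : Set V)ᶜ) x y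
      (by simpa using hx) (strongOn_compl_of_lt_kappa S hS x (by simpa using hx) y
        (by simpa using hy))
    exact ⟨M, hM, Finset.disjoint_left.2 fun x hx => by simpa using hMS x hx, hMc⟩
  obtain ⟨P, core, a, b, hPc, hPd, hPu, hcore, hP⟩ :=
    exists_robust_parts (r := fun x y => G x y ∧ G y x) (fun x y h => h.symm)
      (fun x h => hirr' x h.1) hα (2 * α * (2 * α))
  have haQ : ∀ Q ∈ P, a Q ∈ Q := fun Q hQ => (hP Q hQ).2.2.1 (hP Q hQ).1
  have hbQ : ∀ Q ∈ P, b Q ∈ Q := fun Q hQ => (hP Q hQ).2.2.1 (hP Q hQ).2.1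
  have hPdisj : ∀ Q ∈ P, ∀ R ∈ P, Q ≠ R → ∀ x ∈ Q, ∀ y ∈ R, x ≠ y := by
    rintro Q hQ R hR hQR x hx _ hy rfl
    exact Finset.disjoint_left.1 (hPd hQ hR hQR) hx hy
  obtain ⟨Q₀, hQ₀, hab⟩ : ∃ Q ∈ P, a Q ≠ b Q := by
    by_contra! h
    have h1 : ∀ Q ∈ P, (id Q).card ≤ 1 := by
      intro Q hQ
      have h2 := (hP Q hQ).2.2.2 ∅ (by simp) (by simp)
      rw [← h Q hQ, Finset.sdiff_empty] at h2
      rw [id, h2.eq_singleton]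
      simp
    have h2 := Finset.card_biUnion_le_card_mul P id 1 h1
    have h3 := kappa_lt_card G
    rw [hPu, Finset.card_univ] at h2
    nlinarith [Nat.le_self_pow (n := 3) (by omega) α]
  obtain ⟨D, hDS, hDb, hDa, hDc, hD⟩ := exists_connecting_set hlink a b (P.erase Q₀)
    (fun Q hQ R hR hQR => by
      have hQ := Finset.mem_of_mem_erase hQ
      have hR := Finset.mem_of_mem_erase hR
      have h := hPdisj Q hQ R hR hQR
      exact ⟨h _ (haQ Q hQ) _ (haQ R hR), h _ (haQ Q hQ) _ (hbQ R hR),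
        h _ (hbQ Q hQ) _ (hbQ R hR)⟩)
    (b Q₀) (a Q₀) (P.biUnion core \ {a Q₀, b Q₀}) hab.symm (by simp) (by simp)
    (fun Q hQ => by
      rw [Finset.mem_erase] at hQ
      have h := hPdisj Q hQ.2 Q₀ hQ₀ hQ.1
      have h1 := h _ (haQ Q hQ.2) _ (haQ Q₀ hQ₀)
      have h2 := h _ (haQ Q hQ.2) _ (hbQ Q₀ hQ₀)
      have h3 := h _ (hbQ Q hQ.2) _ (haQ Q₀ hQ₀)
      have h4 := h _ (hbQ Q hQ.2) _ (hbQ Q₀ hQ₀)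
      simp only [Finset.mem_sdiff, Finset.mem_biUnion, Finset.mem_insert, Finset.mem_singleton]
      exact ⟨⟨⟨Q, hQ.2, (hP Q hQ.2).1⟩, by tauto⟩, ⟨Q, hQ.2, (hP Q hQ.2).2.1⟩, by tauto⟩)
    (by
      have h1 : (P.biUnion core \ {a Q₀, b Q₀}).card ≤ (P.biUnion core).card :=
        Finset.card_le_card Finset.sdiff_subset
      have h2 : (P.erase Q₀).card ≤ 2 * α := Finset.card_erase_le.trans hPc
      have h3 := Nat.mul_le_mul_right (2 * α) h2
      have h4 : (2 * α * (2 * α) + α) * α = 4 * α ^ 3 + α ^ 2 := by ring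
      omega)
  rw [Finset.card_erase_add_one hQ₀] at hDc
  have hDc' : D.card ≤ 2 * α * (2 * α) := hDc.trans (Nat.mul_le_mul_right _ hPc)
  have hDcore : ∀ Q ∈ P, Disjoint D (core Q) := by
    intro Q hQ
    rw [Finset.disjoint_left]
    intro x hxD hxQ
    refine Finset.disjoint_left.1 hDS hxD ?_
    simp only [Finset.mem_sdiff, Finset.mem_biUnion, Finset.mem_insert, Finset.mem_singleton]
    refine ⟨⟨Q, hQ, hxQ⟩, ?_⟩
    rintro (rfl | rfl)
    exacts [hDa hxD, hDb hxD]
  have hpath : ∀ Q ∈ P, IsPathOn G (a Q) (b Q) (Q \ D) := fun Q hQ =>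
    ((hP Q hQ).2.2.2 D (hDcore Q hQ) hDc').mono fun x y h => h.1
  have hframe := hD (fun Q => Q \ D)
    (fun Q hQ => by
      rw [Finset.mem_erase] at hQ
      refine ⟨hpath Q hQ.2, Finset.sdiff_disjoint, fun h => ?_, fun h => ?_⟩
      · exact hPdisj Q hQ.2 Q₀ hQ₀ hQ.1 _ (Finset.mem_sdiff.1 h).1 _ (hbQ Q₀ hQ₀) rfl
      · exact hPdisj Q hQ.2 Q₀ hQ₀ hQ.1 _ (Finset.mem_sdiff.1 h).1 _ (haQ Q₀ hQ₀) rfl)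
    (fun Q hQ R hR hQR => (hPd (Finset.mem_of_mem_erase hQ) (Finset.mem_of_mem_erase hR)
      hQR).mono Finset.sdiff_subset Finset.sdiff_subset)
  rcases (hpath Q₀ hQ₀).uncons with ⟨h, -⟩ | ⟨c, hc, hcpath⟩
  · exact absurd h hab
  have hfull := hcpath.glue hframe (by
    intro x hx hx'
    rw [Finset.mem_erase, Finset.mem_sdiff] at hx
    simp only [Finset.mem_insert, Finset.mem_union, Finset.mem_biUnion, Finset.mem_sdiff] at hx'
    rcases hx' with h | h | h | ⟨Q, hQ, h⟩
    · exact h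
    · exact absurd h hx.1
    · exact absurd h hx.2.2
    · rw [Finset.mem_erase] at hQ
      exact absurd rfl (hPdisj Q hQ.2 Q₀ hQ₀ hQ.1 x h.1 x hx.2.1))
  refine IsPathOn.exists_isHamCycle (a := c) (b := a Q₀) ?_ hc
  convert hfull using 1
  symm
  rw [Finset.eq_univ_iff_forall]
  intro x
  obtain ⟨Q, hQ, hxQ⟩ := Finset.mem_biUnion.1 (hPu ▸ Finset.mem_univ x : x ∈ P.biUnion id)
  simp only [Finset.mem_insert, Finset.mem_union, Finset.mem_biUnion, Finset.mem_sdiff,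
    Finset.mem_erase]
  by_cases hxD : x ∈ D
  · tauto
  · by_cases hQQ : Q = Q₀
    · subst hQQ
      by_cases hxa : x = a Q
      · tauto
      · exact Or.inl ⟨hxa, hxQ, hxD⟩
    · exact Or.inr (Or.inr (Or.inr (Or.inr ⟨Q, ⟨hQQ, hQ⟩, hxQ, hxD⟩)))
end

section
/- There exists an integer n₀ such that every digraph G on n ≥ n₀ vertices with minimum semidegree δ⁰(G) ≥ n/2 + n^{5/6} contains every orientation of a Hamilton cycle: for every sequence ε₁, …, εₙ ∈ {+1, −1} there is a cyclic ordering v₁, v₂, …, vₙ of all the vertices of G such that for each i (indices mod n), G contains the edge vᵢvᵢ₊₁ if εᵢ = +1 and the edge vᵢ₊₁vᵢ if εᵢ = −1. -/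
/-- The outdegree of a vertex `x` in the digraph with adjacency relation `G`. -/
noncomputable def outDeg {V : Type*} (G : V → V → Prop) (x : V) : ℕ :=
  Nat.card {y : V // G x y}

/-- The indegree of a vertex `x` in the digraph with adjacency relation `G`. -/
noncomputable def inDeg {V : Type*} (G : V → V → Prop) (x : V) : ℕ :=
  Nat.card {y : V // G y x}

section

open Finset
open scoped Classical

/-- At most a proportion `q ^ #A` of all permutations map `A` into a set `D` of density at most
`q`. -/
theorem card_perm_mapsTo_le {α : Type*} [Fintype α] (D A : Finset α) (q : ℝ) (hq1 : q ≤ 1)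
    (hq : (#D : ℝ) ≤ q * Fintype.card α) :
    (#{e : Equiv.Perm α | ∀ a ∈ A, e a ∈ D} : ℝ) ≤ q ^ #A * (Fintype.card α).factorial := by
  rcases isEmpty_or_nonempty α with hα | hα
  · have hA : A = ∅ := Subsingleton.elim _ _
    subst hA
    simp
  have hN : (0 : ℝ) < Fintype.card α := by exact_mod_cast Fintype.card_pos
  have hq0 : 0 ≤ q := by
    by_contra! h
    have : (0 : ℝ) ≤ #D := by positivity
    nlinarith
  induction A using Finset.induction_on with
  | empty => simp [Fintype.card_perm]
  | insert a A ha ih =>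
    rw [card_insert_of_notMem ha, pow_succ']
    set S : Finset (Equiv.Perm α) := {e | ∀ b ∈ A, e b ∈ D} with hS
    have hsym : ∀ b ∈ Aᶜ, #{e ∈ S | e b ∈ D} = #{e ∈ S | e a ∈ D} := by
      intro b hb
      rw [mem_compl] at hb
      have key : ∀ e : Equiv.Perm α, ∀ c ∈ A, (Equiv.swap a b).trans e c = e c := by
        intro e c hc
        rw [Equiv.trans_apply, Equiv.swap_apply_of_ne_of_ne]
        · rintro rfl; exact ha hc
        · rintro rfl; exact hb hc
      refine card_bij (fun e _ => (Equiv.swap a b).trans e) ?_ ?_ ?_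
      · intro e he
        simp only [hS, mem_filter, mem_univ, true_and] at he ⊢
        refine ⟨fun c hc => ?_, ?_⟩
        · rw [key e c hc]; exact he.1 c hc
        · simpa using he.2
      · intro e _ e' _ h
        ext c
        have := congrArg (fun f : Equiv.Perm α => f (Equiv.swap a b c)) h
        simpa using this
      · intro e he
        refine ⟨(Equiv.swap a b).trans e, ?_, ?_⟩
        · simp only [hS, mem_filter, mem_univ, true_and] at he ⊢
          refine ⟨fun c hc => ?_, ?_⟩
          · rw [key e c hc]; exact he.1 c hc
          · simpa using he.2
        · ext c; simp
    have hcount : ∑ b ∈ Aᶜ, #{e ∈ S | e b ∈ D} = ∑ e ∈ S, #{b ∈ Aᶜ | e b ∈ D} := by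
      simp only [card_filter]
      exact sum_comm
    have hcov : ∀ e ∈ S, #{b ∈ Aᶜ | e b ∈ D} + #A = #D := by
      intro e he
      simp only [hS, mem_filter, mem_univ, true_and] at he
      have : #D = #(D.map e.symm.toEmbedding) := (card_map _).symm
      rw [this, ← card_union_of_disjoint]
      · congr 1
        ext b
        simp only [mem_union, mem_filter, mem_compl, mem_map, Equiv.coe_toEmbedding]
        constructor
        · rintro (h | h)
          · exact ⟨e b, h.2, by simp⟩
          · exact ⟨e b, he b h, by simp⟩
        · rintro ⟨x, hx, rfl⟩
          by_cases h : e.symm x ∈ A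
          · exact Or.inr h
          · exact Or.inl ⟨h, by simpa using hx⟩
      · rw [Finset.disjoint_left]
        intro b hb
        simp only [mem_filter, mem_compl] at hb
        exact hb.1
    rw [sum_congr rfl hsym, sum_const, smul_eq_mul, card_compl] at hcount
    have hfil : ({e : Equiv.Perm α | ∀ c ∈ insert a A, e c ∈ D} : Finset _)
        = {e ∈ S | e a ∈ D} := by
      ext e
      simp only [hS, mem_filter, mem_univ, true_and, mem_insert, forall_eq_or_imp]
      exact and_comm
    rw [hfil]
    rcases S.eq_empty_or_nonempty with hSe | ⟨e₀, he₀⟩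
    · rw [hSe]; simp only [filter_empty, card_empty, Nat.cast_zero]; positivity
    have hAD : #A ≤ #D := by have := hcov e₀ he₀; omega
    have hAN : #A < Fintype.card α := by
      rw [← card_univ]
      exact card_lt_card ⟨subset_univ _, fun h => ha (h (mem_univ _))⟩
    have h2 : ∑ e ∈ S, #{b ∈ Aᶜ | e b ∈ D} = #S * (#D - #A) := by
      rw [sum_congr rfl (g := fun _ => #D - #A) (fun e he => by have := hcov e he; omega)]
      simp
    rw [h2] at hcount
    have h3 : ((Fintype.card α : ℝ) - #A) * #{e ∈ S | e a ∈ D} = #S * (#D - #A) := by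
      have := congrArg (Nat.cast : ℕ → ℝ) hcount
      push_cast [Nat.cast_sub hAD, Nat.cast_sub hAN.le] at this
      exact this
    have hpos : (0 : ℝ) < (Fintype.card α : ℝ) - #A := by
      have : (#A : ℝ) < Fintype.card α := by exact_mod_cast hAN
      linarith
    have h4 : (#{e ∈ S | e a ∈ D} : ℝ) ≤ q * #S := by
      have hA0 : (0 : ℝ) ≤ #A := by positivity
      have hS0 : (0 : ℝ) ≤ #S := by positivity
      refine le_of_mul_le_mul_left ?_ hpos
      rw [h3]
      have : (#D : ℝ) - #A ≤ q * (Fintype.card α - #A) := by nlinarith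
      nlinarith
    calc (#{e ∈ S | e a ∈ D} : ℝ) ≤ q * #S := h4
      _ ≤ q * (q ^ #A * (Fintype.card α).factorial) := by gcongr
      _ = _ := by ring

/-- Chernoff-type bound for sampling without replacement. -/
theorem card_perm_large_inter_le {α : Type*} [Fintype α] (D J : Finset α) (q δ : ℝ)
    (hq1 : q ≤ 1) (hδ0 : 0 ≤ δ) (hδ1 : δ ≤ 1) (hq : (#D : ℝ) ≤ q * Fintype.card α) :
    (#{e : Equiv.Perm α | (q + δ) * #J ≤ (#{j ∈ J | e j ∈ D} : ℝ)} : ℝ)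
      ≤ Real.exp (-(δ ^ 2 * #J / 4)) * (Fintype.card α).factorial := by
  rcases isEmpty_or_nonempty α with hα | hα
  · have hJ : J = ∅ := Subsingleton.elim _ _
    subst hJ
    simp
  have hN : (0 : ℝ) < Fintype.card α := by exact_mod_cast Fintype.card_pos
  have hq0 : 0 ≤ q := by
    by_contra! h
    have : (0 : ℝ) ≤ #D := by positivity
    nlinarith
  set l : ℝ := δ / 2 with hl
  set z : ℝ := Real.exp l - 1 with hz
  have hz0 : 0 ≤ z := by
    have := Real.add_one_le_exp l
    linarith
  have hzl : z ≤ l + l ^ 2 := by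
    have := Real.abs_exp_sub_one_sub_id_le (x := l) (by rw [abs_of_nonneg] <;> linarith)
    have := (abs_le.mp this).2
    linarith
  have hpow : ∀ e : Equiv.Perm α, Real.exp (l * #{j ∈ J | e j ∈ D})
      = ∑ A ∈ J.powerset, if ∀ a ∈ A, e a ∈ D then z ^ #A else 0 := by
    intro e
    have h1 : Real.exp (l * #{j ∈ J | e j ∈ D}) = ∏ j ∈ J, (1 + if e j ∈ D then z else 0) := by
      have : ∀ j ∈ J, (1 + if e j ∈ D then z else 0) = if e j ∈ D then Real.exp l else 1 := by
        intro j _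
        split_ifs
        · rw [hz]; ring
        · ring
      rw [prod_congr rfl this, prod_ite, prod_const_one, mul_one, prod_const, mul_comm,
        Real.exp_nat_mul]
    rw [h1, prod_one_add]
    refine sum_congr rfl fun A _ => ?_
    rw [prod_ite_zero, prod_const]
    congr
  have hmgf : ∑ e : Equiv.Perm α, Real.exp (l * #{j ∈ J | e j ∈ D})
      ≤ (1 + z * q) ^ #J * (Fintype.card α).factorial := by
    simp_rw [hpow]
    rw [sum_comm]
    have : (1 + z * q) ^ #J = ∑ A ∈ J.powerset, (z * q) ^ #A := by
      rw [← prod_const, prod_one_add]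
      simp
    rw [this, sum_mul]
    refine sum_le_sum fun A _ => ?_
    rw [← sum_filter, sum_const, nsmul_eq_mul, mul_pow]
    have := card_perm_mapsTo_le D A q hq1 hq
    have hzA : 0 ≤ z ^ #A := by positivity
    nlinarith
  have hmarkov : (#{e : Equiv.Perm α | (q + δ) * #J ≤ (#{j ∈ J | e j ∈ D} : ℝ)} : ℝ)
      * Real.exp (l * ((q + δ) * #J)) ≤ ∑ e : Equiv.Perm α, Real.exp (l * #{j ∈ J | e j ∈ D}) := by
    rw [← nsmul_eq_mul, ← sum_const]
    refine (sum_le_sum fun e he => ?_).trans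
      (sum_le_sum_of_subset_of_nonneg (subset_univ _) fun _ _ _ => (Real.exp_pos _).le)
    rw [mem_filter] at he
    have : 0 ≤ l := by positivity
    gcongr
    exact he.2
  have hexp : (1 + z * q) ^ #J ≤ Real.exp (-(δ ^ 2 * #J / 4)) * Real.exp (l * ((q + δ) * #J)) := by
    calc (1 + z * q) ^ #J ≤ Real.exp (z * q) ^ #J := by
          gcongr
          rw [add_comm]
          exact Real.add_one_le_exp _
      _ = Real.exp (#J * (z * q)) := (Real.exp_nat_mul _ _).symm
      _ ≤ _ := by
          rw [← Real.exp_add]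
          apply Real.exp_le_exp.mpr
          have hJ0 : (0 : ℝ) ≤ #J := by positivity
          have : z * q ≤ -(δ ^ 2 / 4) + l * (q + δ) := by
            have h1 : z * q ≤ (l + l ^ 2) * q := by gcongr
            have h2 : l ^ 2 * q ≤ l ^ 2 := mul_le_of_le_one_right (by positivity) hq1
            rw [hl] at *
            nlinarith
          nlinarith
  have hpos := Real.exp_pos (l * ((q + δ) * #J))
  refine le_of_mul_le_mul_right ?_ hpos
  calc _ ≤ _ := hmarkov
    _ ≤ _ := hmgf
    _ ≤ (Real.exp (-(δ ^ 2 * #J / 4)) * Real.exp (l * ((q + δ) * #J)))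
        * (Fintype.card α).factorial := by gcongr
    _ = _ := by ring

/-- A balanced bipartite graph in which every vertex is adjacent to at least half of the other
side has a perfect matching; here both sides are the finset `U`. -/
theorem exists_perm_of_half_degree {α : Type*} (A : α → α → Prop) (U : Finset α)
    (hl : ∀ a ∈ U, 2 * #{b ∈ U | ¬ A a b} ≤ #U) (hr : ∀ b ∈ U, 2 * #{a ∈ U | ¬ A a b} ≤ #U) :
    ∃ ρ : Equiv.Perm α, (∀ a ∈ U, ρ a ∈ U ∧ A a (ρ a)) ∧ ∀ a, a ∉ U → ρ a = a := by
  have hall : ∀ s : Finset U, #s ≤ #(s.biUnion fun a => {b ∈ U | A a b}) := by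
    intro s
    rcases s.eq_empty_or_nonempty with rfl | ⟨a, ha⟩
    · simp
    by_cases hs : 2 * #s ≤ #U
    · have h1 : #{b ∈ U | A a b} ≤ #(s.biUnion fun a => {b ∈ U | A (a : α) b}) :=
        card_le_card (subset_biUnion_of_mem (fun a : U => {b ∈ U | A (a : α) b}) ha)
      have h2 := card_filter_add_card_filter_not (s := U) (fun b => A a b)
      have h3 := hl a a.2
      omega
    · have : U ⊆ s.biUnion fun a => {b ∈ U | A a b} := by
        intro b hb
        by_contra hcon
        have hsub : s.map (Function.Embedding.subtype _) ⊆ {a ∈ U | ¬ A a b} := by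
          intro x hx
          rw [mem_map] at hx
          obtain ⟨y, hy, rfl⟩ := hx
          rw [mem_filter]
          refine ⟨y.2, fun hA => hcon ?_⟩
          rw [mem_biUnion]
          exact ⟨y, hy, by rw [mem_filter]; exact ⟨hb, hA⟩⟩
        have h1 := card_le_card hsub
        rw [card_map] at h1
        have := hr b hb
        omega
      have h1 := card_le_card this
      have h2 := card_le_univ s
      rw [Fintype.card_coe] at h2
      omega
  obtain ⟨f, hf, hfA⟩ := (all_card_le_biUnion_card_iff_exists_injective _).mp hall
  have hfU : ∀ a, f a ∈ U := fun a => (mem_filter.mp (hfA a)).1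
  let g : U → U := fun a => ⟨f a, hfU a⟩
  have hg : Function.Bijective g := by
    rw [← Finite.injective_iff_bijective]
    intro a b h
    exact hf (congrArg Subtype.val h)
  let e : Equiv.Perm {a // a ∈ U} := Equiv.ofBijective g hg
  refine ⟨Equiv.Perm.ofSubtype e, fun a ha => ?_, fun a ha => ?_⟩
  · rw [Equiv.Perm.ofSubtype_apply_of_mem e ha]
    exact ⟨(e ⟨a, ha⟩).2, (mem_filter.mp (hfA ⟨a, ha⟩)).2⟩
  · exact Equiv.Perm.ofSubtype_apply_of_not_mem e ha

/-- One step of the row process. Columns labelled by `α` sit at `π : Perm α` in the current row;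
a bijection `F` of the set of all placements moves almost all placements to a placement in the
next row along edges whose directions are prescribed column by column. -/
theorem exists_equiv_placement_step {α : Type*} [Fintype α] (A : Bool → α → α → Prop) (δ : ℝ)
    (hδ0 : 0 ≤ δ) (hδ1 : δ ≤ 1)
    (hl : ∀ c a, (#{b | ¬ A c a b} : ℝ) ≤ (1 / 2 - δ) * Fintype.card α)
    (hr : ∀ c b, (#{a | ¬ A c a b} : ℝ) ≤ (1 / 2 - δ) * Fintype.card α) (σ : α → Bool) :
    ∃ F : Equiv.Perm α ≃ Equiv.Perm α,
      (#{π : Equiv.Perm α | ¬ ∀ j, A (σ j) (π j) (F π j)} : ℝ) ≤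
        2 * Fintype.card α * (Real.exp (-(δ ^ 2 * Fintype.card α / 8))
          * (Fintype.card α).factorial) := by
  obtain ⟨c, hc⟩ : ∃ c : Bool, Fintype.card α ≤ 2 * #{j | σ j ≠ c} := by
    have h := card_filter_add_card_filter_not (s := (univ : Finset α)) (fun j => σ j ≠ true)
    rw [card_univ] at h
    by_cases h1 : Fintype.card α ≤ 2 * #{j | σ j ≠ true}
    · exact ⟨true, h1⟩
    · refine ⟨false, ?_⟩
      have : ({j | ¬ σ j ≠ true} : Finset α) = ({j | σ j ≠ false} : Finset α) := by
        ext j; simp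
      rw [this] at h
      omega
  set K : Finset α := {j | σ j ≠ c} with hK
  obtain ⟨μ, hμ, -⟩ := exists_perm_of_half_degree (A c) univ
    (fun a _ => by
      have h1 := hl c a
      have h0 : (0 : ℝ) ≤ Fintype.card α := by positivity
      rw [card_univ]
      have : (2 * #{b | ¬ A c a b} : ℝ) ≤ Fintype.card α := by nlinarith
      exact_mod_cast this)
    (fun a _ => by
      have h1 := hr c a
      have h0 : (0 : ℝ) ≤ Fintype.card α := by positivity
      rw [card_univ]
      have : (2 * #{b | ¬ A c b a} : ℝ) ≤ Fintype.card α := by nlinarith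
      exact_mod_cast this)
  let Good : Finset α → Equiv.Perm α → Prop := fun U ρ =>
    (∀ a ∈ U, ρ a ∈ U ∧ A (!c) a (μ (ρ a))) ∧ ∀ a, a ∉ U → ρ a = a
  let ρ : Finset α → Equiv.Perm α := fun U =>
    if h : ∃ ρ, Good U ρ then h.choose else 1
  have hρU : ∀ U, ∀ a, a ∉ U → ρ U a = a := by
    intro U a ha
    simp only [ρ]
    split_ifs with h
    · exact h.choose_spec.2 a ha
    · rfl
  let F : Equiv.Perm α → Equiv.Perm α := fun π => μ * ρ (K.map π.toEmbedding) * π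
  have hF : Function.Injective F := by
    have key : ∀ π, K.map (F π).toEmbedding = (K.map π.toEmbedding).map μ.toEmbedding := by
      intro π
      set U := K.map π.toEmbedding with hU
      have hmaps : ∀ a, ρ U a ∈ U ↔ a ∈ U := by
        intro a
        constructor
        · intro h
          by_contra ha
          rw [hρU U a ha] at h
          exact ha h
        · intro h
          by_contra ha
          have := hρU U _ ha
          exact ha (by rw [(ρ U).injective this]; exact h)
      have h1 : U.map (ρ U).toEmbedding = U := by
        ext x
        rw [mem_map_equiv]
        have := hmaps ((ρ U).symm x)
        simpa using this.symm
      calc K.map (F π).toEmbedding = ((K.map π.toEmbedding).map (ρ U).toEmbedding).map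
            μ.toEmbedding := by
            rw [map_map, map_map]; rfl
        _ = _ := by rw [← hU, h1]
    intro π π' h
    have h1 := key π
    rw [h, key π'] at h1
    have h2 : K.map π'.toEmbedding = K.map π.toEmbedding := map_injective _ h1
    simp only [F] at h
    rw [h2] at h
    exact mul_left_cancel h
  have hFb : Function.Bijective F := Finite.injective_iff_bijective.mp hF
  refine ⟨Equiv.ofBijective F hFb, ?_⟩
  set E : ℝ := Real.exp (-(δ ^ 2 * Fintype.card α / 8)) * (Fintype.card α).factorial with hE
  let Dl : α → Finset α := fun a => {b | ¬ A (!c) a (μ b)}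
  let Dr : α → Finset α := fun b => {a | ¬ A (!c) a (μ b)}
  let BL : (α → Finset α) → α → Finset (Equiv.Perm α) := fun D a =>
    {e | (1 / 2 - δ + δ) * #K ≤ (#{j ∈ K | e j ∈ D a} : ℝ)}
  have hBL : ∀ D : α → Finset α, (∀ a, (#(D a) : ℝ) ≤ (1 / 2 - δ) * Fintype.card α) →
      ∀ a, (#(BL D a) : ℝ) ≤ E := by
    intro D hD a
    refine (card_perm_large_inter_le (D a) K (1 / 2 - δ) δ (by linarith) hδ0 hδ1 (hD a)).trans ?_
    rw [hE]
    refine mul_le_mul_of_nonneg_right (Real.exp_le_exp.mpr ?_) (by positivity)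
    have : (Fintype.card α : ℝ) ≤ 2 * #K := by exact_mod_cast hc
    nlinarith [mul_le_mul_of_nonneg_left this (sq_nonneg δ)]
  have hDl : ∀ a, (#(Dl a) : ℝ) ≤ (1 / 2 - δ) * Fintype.card α := by
    intro a
    refine le_trans (le_of_eq ?_) (hl (!c) a)
    congr 1
    refine card_bij (fun b _ => μ b) (by simp [Dl]) (by simp) ?_
    intro b hb
    exact ⟨μ.symm b, by simpa [Dl] using hb, by simp⟩
  have hDr : ∀ a, (#(Dr a) : ℝ) ≤ (1 / 2 - δ) * Fintype.card α := fun a => hr (!c) (μ a)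
  have hsub : ({π : Equiv.Perm α | ¬ ∀ j, A (σ j) (π j) (F π j)} : Finset _) ⊆
      (univ.biUnion (BL Dl)) ∪ (univ.biUnion (BL Dr)) := by
    intro π hπ
    by_contra hcon
    simp only [mem_union, mem_biUnion, mem_univ, true_and, not_or, not_exists, BL, mem_filter,
      not_le, sub_add_cancel] at hcon
    rw [mem_filter] at hπ
    apply hπ.2
    set U := K.map π.toEmbedding with hU
    have hcU : #U = #K := card_map _
    have hcard : ∀ D : Finset α, #{j ∈ K | π j ∈ D} = #{x ∈ U | x ∈ D} := by
      intro D
      rw [hU, filter_map, card_map]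
      rfl
    have hex : ∃ ρ, Good U ρ := by
      refine exists_perm_of_half_degree (fun a b => A (!c) a (μ b)) U ?_ ?_
      · intro a _
        have h1 := hcon.1 a
        rw [hcard] at h1
        have h2 : (2 * #{x ∈ U | x ∈ Dl a} : ℝ) ≤ #U := by rw [hcU]; linarith
        have h3 : 2 * #{x ∈ U | x ∈ Dl a} ≤ #U := by exact_mod_cast h2
        simpa [Dl] using h3
      · intro a _
        have h1 := hcon.2 a
        rw [hcard] at h1
        have h2 : (2 * #{x ∈ U | x ∈ Dr a} : ℝ) ≤ #U := by rw [hcU]; linarith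
        have h3 : 2 * #{x ∈ U | x ∈ Dr a} ≤ #U := by exact_mod_cast h2
        simpa [Dr] using h3
    have hρ : Good U (ρ U) := by
      simp only [ρ, dif_pos hex]
      exact hex.choose_spec
    intro j
    have hFj : F π j = μ (ρ U (π j)) := rfl
    rw [hFj]
    by_cases hj : σ j = c
    · have : π j ∉ U := by
        rw [hU, mem_map_equiv]
        simp [hK, hj]
      rw [hρ.2 _ this, hj]
      exact (hμ _ (mem_univ _)).2
    · have : π j ∈ U := by
        rw [hU, mem_map_equiv]
        simp [hK, hj]
      have h1 : σ j = !c := by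
        cases h : σ j <;> cases c <;> simp_all
      rw [h1]
      exact (hρ.1 _ this).2
  have hcount : ∀ D : α → Finset α, (∀ a, (#(D a) : ℝ) ≤ (1 / 2 - δ) * Fintype.card α) →
      (#(univ.biUnion (BL D)) : ℝ) ≤ Fintype.card α * E := by
    intro D hD
    calc (#(univ.biUnion (BL D)) : ℝ) ≤ ∑ a : α, (#(BL D a) : ℝ) := by
          exact_mod_cast card_biUnion_le
      _ ≤ ∑ _a : α, E := sum_le_sum fun a _ => hBL D hD a
      _ = _ := by simp
  calc _ ≤ (#((univ.biUnion (BL Dl)) ∪ (univ.biUnion (BL Dr))) : ℝ) := by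
        exact_mod_cast card_le_card hsub
    _ ≤ #(univ.biUnion (BL Dl)) + #(univ.biUnion (BL Dr)) := by exact_mod_cast card_union_le _ _
    _ ≤ Fintype.card α * E + Fintype.card α * E := add_le_add (hcount _ hDl) (hcount _ hDr)
    _ = _ := by ring

/-- The row process: all columns can be moved simultaneously through a sequence of rows. -/
theorem exists_placements {α : Type*} [Fintype α] (k : ℕ) (A : ℕ → Bool → α → α → Prop) (δ : ℝ)
    (hδ0 : 0 ≤ δ) (hδ1 : δ ≤ 1)
    (hl : ∀ i < k, ∀ c a, (#{b | ¬ A i c a b} : ℝ) ≤ (1 / 2 - δ) * Fintype.card α)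
    (hr : ∀ i < k, ∀ c b, (#{a | ¬ A i c a b} : ℝ) ≤ (1 / 2 - δ) * Fintype.card α)
    (hnum : k * (2 * Fintype.card α * Real.exp (-(δ ^ 2 * Fintype.card α / 8))) < 1)
    (σ : ℕ → α → Bool) :
    ∃ π : ℕ → Equiv.Perm α, ∀ i < k, ∀ j, A i (σ i j) (π i j) (π (i + 1) j) := by
  have hstep : ∀ i, ∃ F : Equiv.Perm α ≃ Equiv.Perm α, i < k →
      (#{π : Equiv.Perm α | ¬ ∀ j, A i (σ i j) (π j) (F π j)} : ℝ) ≤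
        2 * Fintype.card α * (Real.exp (-(δ ^ 2 * Fintype.card α / 8))
          * (Fintype.card α).factorial) := by
    intro i
    by_cases hi : i < k
    · obtain ⟨F, hF⟩ := exists_equiv_placement_step (A i) δ hδ0 hδ1 (hl i hi) (hr i hi) (σ i)
      exact ⟨F, fun _ => hF⟩
    · exact ⟨Equiv.refl _, fun h => absurd h hi⟩
  choose F hF using hstep
  let P : ℕ → (Equiv.Perm α ≃ Equiv.Perm α) := fun i =>
    Nat.rec (Equiv.refl _) (fun i Q => Q.trans (F i)) i
  have hP : ∀ i π, P (i + 1) π = F i (P i π) := fun i π => rfl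
  let B : ℕ → Finset (Equiv.Perm α) := fun i =>
    {π | ¬ ∀ j, A i (σ i j) (P i π j) (P (i + 1) π j)}
  have hB : ∀ i < k, (#(B i) : ℝ) ≤ 2 * Fintype.card α *
      (Real.exp (-(δ ^ 2 * Fintype.card α / 8)) * (Fintype.card α).factorial) := by
    intro i hi
    refine le_trans (le_of_eq ?_) (hF i hi)
    congr 1
    refine card_bij (fun π _ => P i π) ?_ (by simp) ?_
    · intro π hπ
      simpa [B, hP] using hπ
    · intro π hπ
      exact ⟨(P i).symm π, by simpa [B, hP] using hπ, by simp⟩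
  have hlt : #((range k).biUnion B) < #(univ : Finset (Equiv.Perm α)) := by
    rw [card_univ, Fintype.card_perm]
    have hfac : (0 : ℝ) < (Fintype.card α).factorial := by exact_mod_cast Nat.factorial_pos _
    have : (#((range k).biUnion B) : ℝ) < (Fintype.card α).factorial := by
      calc (#((range k).biUnion B) : ℝ) ≤ ∑ i ∈ range k, (#(B i) : ℝ) := by
            exact_mod_cast card_biUnion_le
        _ ≤ ∑ _i ∈ range k, 2 * Fintype.card α *
              (Real.exp (-(δ ^ 2 * Fintype.card α / 8)) * (Fintype.card α).factorial) :=
            sum_le_sum fun i hi => hB i (mem_range.mp hi)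
        _ = k * (2 * Fintype.card α * Real.exp (-(δ ^ 2 * Fintype.card α / 8)))
              * (Fintype.card α).factorial := by simp; ring
        _ < 1 * (Fintype.card α).factorial := by gcongr
        _ = _ := one_mul _
    exact_mod_cast this
  obtain ⟨π, -, hπ⟩ := exists_mem_notMem_of_card_lt_card hlt
  refine ⟨fun i => P i π, fun i hi j => ?_⟩
  by_contra hcon
  apply hπ
  rw [mem_biUnion]
  refine ⟨i, mem_range.mpr hi, ?_⟩
  simp only [B, mem_filter, mem_univ, true_and]
  exact fun h => hcon (h j)

/-- A random partition of the vertices into `k` rows of size `m`, followed by the row process,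
yields `m` vertex-disjoint paths with prescribed directions that cover everything. -/
theorem exists_spanning_columns {W : Type*} [Fintype W] (k m : ℕ) (hm : 0 < m)
    (hW : Fintype.card W = k * m) (E : Bool → W → W → Prop) (δ : ℝ) (hδ0 : 0 ≤ δ) (hδ1 : δ ≤ 1)
    (hl : ∀ b x, (#{y | ¬ E b x y} : ℝ) ≤ (1 / 2 - 2 * δ) * Fintype.card W)
    (hr : ∀ b y, (#{x | ¬ E b x y} : ℝ) ≤ (1 / 2 - 2 * δ) * Fintype.card W)
    (hnum : 4 * (k * m : ℝ) ^ 2 * Real.exp (-(δ ^ 2 * m / 8)) < 1)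
    (σ : ℕ → Fin m → Bool) :
    ∃ ρ : Fin k × Fin m ≃ W, ∀ (i : ℕ) (hi : i + 1 < k) (j : Fin m),
      E (σ i j) (ρ (⟨i, (Nat.lt_succ_self i).trans hi⟩, j)) (ρ (⟨i + 1, hi⟩, j)) := by
  have e₀ : Fin k × Fin m ≃ W := Fintype.equivOfCardEq (by simp [hW])
  have hm1 : (1 : ℝ) ≤ m := by exact_mod_cast hm
  have hk0 : (0 : ℝ) ≤ k := by positivity
  let J : Fin k → Finset W := fun i => univ.map ⟨fun j => e₀ (i, j), fun a b h => by simpa using h⟩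
  have hJ : ∀ i, #(J i) = m := fun i => by simp [J]
  let D : Bool × Bool × W → Finset W := fun t =>
    if t.1 then univ.filter fun y => ¬ E t.2.1 t.2.2 y else univ.filter fun x => ¬ E t.2.1 x t.2.2
  have hD : ∀ t, (#(D t) : ℝ) ≤ (1 / 2 - 2 * δ) * Fintype.card W := by
    rintro ⟨s, b, x⟩
    cases s
    · exact hr b x
    · exact hl b x
  let Bad : (Bool × Bool × W) × Fin k → Finset (Equiv.Perm W) := fun t =>
    {e | (1 / 2 - 2 * δ + δ) * #(J t.2) ≤ (#{j ∈ J t.2 | e j ∈ D t.1} : ℝ)}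
  have hBad : ∀ t, (#(Bad t) : ℝ) ≤ Real.exp (-(δ ^ 2 * m / 8)) * (Fintype.card W).factorial := by
    intro t
    refine (card_perm_large_inter_le (D t.1) (J t.2) (1 / 2 - 2 * δ) δ (by linarith) hδ0 hδ1
      (hD t.1)).trans ?_
    rw [hJ]
    refine mul_le_mul_of_nonneg_right (Real.exp_le_exp.mpr ?_) (by positivity)
    nlinarith [mul_nonneg (sq_nonneg δ) (zero_le_one.trans hm1)]
  obtain ⟨e, he⟩ : ∃ e : Equiv.Perm W, ∀ t, e ∉ Bad t := by
    have hlt : #(univ.biUnion Bad) < #(univ : Finset (Equiv.Perm W)) := by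
      rw [card_univ, Fintype.card_perm]
      have hfac : (0 : ℝ) < (Fintype.card W).factorial := by exact_mod_cast Nat.factorial_pos _
      have : (#(univ.biUnion Bad) : ℝ) < (Fintype.card W).factorial := by
        calc (#(univ.biUnion Bad) : ℝ) ≤ ∑ t, (#(Bad t) : ℝ) := by
              exact_mod_cast card_biUnion_le
          _ ≤ ∑ _t, Real.exp (-(δ ^ 2 * m / 8)) * (Fintype.card W).factorial :=
              sum_le_sum fun t _ => hBad t
          _ = (4 * (k * m) * k * Real.exp (-(δ ^ 2 * m / 8))) * (Fintype.card W).factorial := by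
              simp [hW]; ring
          _ ≤ (4 * (k * m : ℝ) ^ 2 * Real.exp (-(δ ^ 2 * m / 8)))
                * (Fintype.card W).factorial := by
              have hkm : 4 * (k * m) * k ≤ 4 * (k * m : ℝ) ^ 2 := by
                nlinarith [mul_nonneg (mul_nonneg (mul_nonneg hk0 hk0) (zero_le_one.trans hm1))
                  (sub_nonneg.mpr hm1)]
              gcongr
          _ < 1 * (Fintype.card W).factorial := by gcongr
          _ = _ := one_mul _
      exact_mod_cast this
    obtain ⟨e, -, he⟩ := exists_mem_notMem_of_card_lt_card hlt
    exact ⟨e, fun t ht => he (mem_biUnion.mpr ⟨t, mem_univ _, ht⟩)⟩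
  have hrow : ∀ t i, (#{j : Fin m | e (e₀ (i, j)) ∈ D t} : ℝ) ≤ (1 / 2 - δ) * m := by
    intro t i
    have h := he (t, i)
    simp only [Bad, mem_filter, mem_univ, true_and, not_le, hJ] at h
    have h1 : #{j ∈ J i | e j ∈ D t} = #{j : Fin m | e (e₀ (i, j)) ∈ D t} := by
      simp only [J]
      rw [filter_map, card_map]
      rfl
    rw [h1] at h
    linarith
  let A : ℕ → Bool → Fin m → Fin m → Prop := fun i c a b => ∀ hi : i + 1 < k,
    E c (e (e₀ (⟨i, (Nat.lt_succ_self i).trans hi⟩, a))) (e (e₀ (⟨i + 1, hi⟩, b)))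
  obtain ⟨π, hπ⟩ := exists_placements (k - 1) A δ hδ0 hδ1
    (by
      intro i hi c a
      have hi' : i + 1 < k := by omega
      have := hrow (true, c, e (e₀ (⟨i, (Nat.lt_succ_self i).trans hi'⟩, a))) ⟨i + 1, hi'⟩
      simpa [D, A, hi'] using this)
    (by
      intro i hi c b
      have hi' : i + 1 < k := by omega
      have := hrow (false, c, e (e₀ (⟨i + 1, hi'⟩, b))) ⟨i, (Nat.lt_succ_self i).trans hi'⟩
      simpa [D, A, hi'] using this)
    (by
      rcases Nat.eq_zero_or_pos k with rfl | hk
      · simp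
      have hk1 : (1 : ℝ) ≤ k := by exact_mod_cast hk
      rw [Nat.cast_sub hk]
      simp only [Fintype.card_fin]
      refine lt_of_le_of_lt ?_ hnum
      rw [← mul_assoc]
      refine mul_le_mul_of_nonneg_right ?_ (Real.exp_pos _).le
      push_cast
      have h1 : 1 ≤ (k * m : ℝ) := one_le_mul_of_one_le_of_one_le hk1 hm1
      nlinarith)
    σ
  refine ⟨((Equiv.prodShear (Equiv.refl _) fun i : Fin k => π i).trans e₀).trans e, ?_⟩
  intro i hi j
  exact hπ i (by omega) j hi

/-- Greedy systems of distinct representatives avoiding a given set. -/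
theorem exists_injOn_mem_of_card_le {V : Type*} [Nonempty V] (D : ℕ → Finset V) (P : Finset V)
    (r : ℕ) (hD : ∀ i < r, #P + r ≤ #(D i)) :
    ∃ a : ℕ → V, Set.InjOn a (range r) ∧ ∀ i < r, a i ∈ D i ∧ a i ∉ P := by
  induction r with
  | zero => exact ⟨fun _ => Classical.arbitrary V, by simp, by simp⟩
  | succ r ih =>
    obtain ⟨a, ha, haD⟩ := ih fun i hi => by have := hD i (by omega); omega
    have hlt : #(P ∪ (range r).image a) < #(D r) := by
      have h1 := card_union_le P ((range r).image a)
      have h2 := card_image_le (s := range r) (f := a)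
      rw [card_range] at h2
      have := hD r (by omega)
      omega
    obtain ⟨x, hxD, hx⟩ := exists_mem_notMem_of_card_lt_card hlt
    simp only [mem_union, mem_image, mem_range, not_or, not_exists, not_and] at hx
    refine ⟨Function.update a r x, ?_, ?_⟩
    · intro i hi j hj h
      simp only [coe_range, Set.mem_Iio] at hi hj
      by_cases h1 : i = r <;> by_cases h2 : j = r
      · omega
      · subst h1
        rw [Function.update_self, Function.update_of_ne h2] at h
        exact absurd h.symm (hx.2 j (by omega))
      · subst h2
        rw [Function.update_self, Function.update_of_ne h1] at h
        exact absurd h (hx.2 i (by omega))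
      · rw [Function.update_of_ne h1, Function.update_of_ne h2] at h
        exact ha (by simp; omega) (by simp; omega) h
    · intro i hi
      by_cases h1 : i = r
      · subst h1
        rw [Function.update_self]
        exact ⟨hxD, hx.1⟩
      · rw [Function.update_of_ne h1]
        exact haD i (by omega)

/-- Greedily chosen points leave only an exponentially small proportion of large sets unhit. -/
theorem exists_injOn_card_unhit_le {ι V : Type*} [Fintype ι] [Nonempty ι] [Fintype V] [Nonempty V]
    (C : ι → Finset V) (P : Finset V) (c : ℝ) (hc : 0 < c) (T : ℕ)
    (hC : ∀ i, (#P + T + c : ℝ) ≤ #(C i)) :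
    ∃ v : ℕ → V, Set.InjOn v (range T) ∧ (∀ t < T, v t ∉ P) ∧
      (#{i | ∀ t < T, v t ∉ C i} : ℝ) ≤ Fintype.card ι * (1 - c / Fintype.card V) ^ T := by
  induction T with
  | zero => exact ⟨fun _ => Classical.arbitrary V, by simp, by simp, by simp⟩
  | succ T ih =>
    obtain ⟨v, hv, hvP, hvC⟩ := ih fun i => by
      have := hC i
      push_cast at this
      linarith
    set I : Finset ι := {i | ∀ t < T, v t ∉ C i} with hI
    set P' : Finset V := P ∪ (range T).image v with hP'
    have hN : (0 : ℝ) < Fintype.card V := by exact_mod_cast Fintype.card_pos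
    have hP'c : #P' ≤ #P + T := by
      have h1 : #P' ≤ _ := card_union_le P ((range T).image v)
      have h2 := card_image_le (s := range T) (f := v)
      rw [card_range] at h2
      omega
    have hlarge : ∀ i, c ≤ (#{x ∈ P'ᶜ | x ∈ C i} : ℝ) := by
      intro i
      have h1 : C i ⊆ P' ∪ {x ∈ P'ᶜ | x ∈ C i} := by
        intro x hx
        by_cases h : x ∈ P'
        · exact mem_union_left _ h
        · exact mem_union_right _ (mem_filter.mpr ⟨mem_compl.mpr h, hx⟩)
      have h2 : #(C i) ≤ #P + T + #{x ∈ P'ᶜ | x ∈ C i} := by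
        have := (card_le_card h1).trans (card_union_le _ _)
        omega
      have h3 : (#(C i) : ℝ) ≤ #P + T + #{x ∈ P'ᶜ | x ∈ C i} := by exact_mod_cast h2
      have := hC i
      push_cast at this
      linarith
    have hne : P'ᶜ.Nonempty := by
      have h1 := hlarge (Classical.arbitrary ι)
      have h2 : (0 : ℝ) < #{x ∈ P'ᶜ | x ∈ C (Classical.arbitrary ι)} := hc.trans_le h1
      have h3 : 0 < #{x ∈ P'ᶜ | x ∈ C (Classical.arbitrary ι)} := by exact_mod_cast h2
      exact (card_pos.mp h3).mono (filter_subset _ _)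
    obtain ⟨x, hx, hxI⟩ : ∃ x ∈ P'ᶜ, c * #I / Fintype.card V ≤ (#{i ∈ I | x ∈ C i} : ℝ) := by
      apply exists_le_of_sum_le hne
      have hswap : ∑ x ∈ P'ᶜ, (#{i ∈ I | x ∈ C i} : ℝ) = ∑ i ∈ I, (#{x ∈ P'ᶜ | x ∈ C i} : ℝ) := by
        simp only [card_filter, Nat.cast_sum]
        exact sum_comm
      rw [hswap, sum_const, nsmul_eq_mul]
      calc (#P'ᶜ : ℝ) * (c * #I / Fintype.card V)
          ≤ Fintype.card V * (c * #I / Fintype.card V) := by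
            gcongr
            exact card_le_univ _
        _ = ∑ _i ∈ I, c := by
            rw [sum_const, nsmul_eq_mul]
            field_simp
        _ ≤ _ := sum_le_sum fun i _ => hlarge i
    rw [mem_compl, hP', mem_union, mem_image, not_or] at hx
    obtain ⟨hxP, hxv⟩ := hx
    simp only [mem_range, not_exists, not_and] at hxv
    have hlt : ∀ t < T, Function.update v T x t = v t := fun t ht =>
      Function.update_of_ne (by omega) _ _
    refine ⟨Function.update v T x, ?_, ?_, ?_⟩
    · intro i hi j hj h
      simp only [coe_range, Set.mem_Iio] at hi hj
      by_cases h1 : i = T <;> by_cases h2 : j = T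
      · omega
      · subst h1
        rw [Function.update_self, Function.update_of_ne h2] at h
        exact absurd h.symm (hxv j (by omega))
      · subst h2
        rw [Function.update_self, Function.update_of_ne h1] at h
        exact absurd h (hxv i (by omega))
      · rw [Function.update_of_ne h1, Function.update_of_ne h2] at h
        exact hv (by simp; omega) (by simp; omega) h
    · intro t ht
      by_cases h1 : t = T
      · subst h1
        rwa [Function.update_self]
      · rw [Function.update_of_ne h1]
        exact hvP t (by omega)
    · have hsub : ({i | ∀ t < T + 1, Function.update v T x t ∉ C i} : Finset ι)
          ⊆ {i ∈ I | ¬ x ∈ C i} := by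
        intro i hi
        simp only [hI, mem_filter, mem_univ, true_and] at hi ⊢
        refine ⟨fun t ht => ?_, ?_⟩
        · rw [← hlt t ht]
          exact hi t (by omega)
        · simpa using hi T (by omega)
      have h1 := card_filter_add_card_filter_not (s := I) (fun i => x ∈ C i)
      have h2 : (#{i ∈ I | x ∈ C i} : ℝ) + #{i ∈ I | ¬ x ∈ C i} = #I := by exact_mod_cast h1
      have hcN : 0 ≤ 1 - c / Fintype.card V := by
        rw [sub_nonneg, div_le_one hN]
        refine (hlarge (Classical.arbitrary ι)).trans ?_
        exact_mod_cast card_le_univ _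
      calc (#{i | ∀ t < T + 1, Function.update v T x t ∉ C i} : ℝ) ≤ #{i ∈ I | ¬ x ∈ C i} := by
            exact_mod_cast card_le_card hsub
        _ ≤ (1 - c / Fintype.card V) * #I := by
            have : (1 - c / Fintype.card V) * #I = #I - c * #I / Fintype.card V := by ring
            linarith
        _ ≤ (1 - c / Fintype.card V) * (Fintype.card ι * (1 - c / Fintype.card V) ^ T) := by gcongr
        _ = _ := by ring

/-- Consecutive blocks of points, each of which hits every set of a family of large sets. -/
theorem exists_injOn_blocks_hit {ι V : Type*} [Fintype ι] [Nonempty ι] [Fintype V] [Nonempty V]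
    (C : ι → Finset V) (P : Finset V) (c : ℝ) (hc : 0 < c) (T : ℕ) (Q : ℕ)
    (hC : ∀ i, (#P + Q * T + c : ℝ) ≤ #(C i))
    (hnum : Fintype.card ι * (1 - c / Fintype.card V) ^ T < 1) :
    ∃ w : ℕ → V, Set.InjOn w (range (Q * T)) ∧ (∀ s < Q * T, w s ∉ P) ∧
      ∀ q < Q, ∀ i, ∃ s < Q * T, s / T = q ∧ w s ∈ C i := by
  induction Q with
  | zero => exact ⟨fun _ => Classical.arbitrary V, by simp, by simp, by simp⟩
  | succ Q ih =>
    have hTnn : (0 : ℝ) ≤ T := by positivity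
    obtain ⟨w, hw, hwP, hwC⟩ := ih fun i => by
      have := hC i
      push_cast at this
      linarith
    set P' : Finset V := P ∪ (range (Q * T)).image w with hP'
    have hP'c : (#P' : ℝ) ≤ #P + Q * T := by
      have h1 := card_union_le P ((range (Q * T)).image w)
      have h2 := card_image_le (s := range (Q * T)) (f := w)
      rw [card_range] at h2
      exact_mod_cast h1.trans (by omega)
    obtain ⟨v, hv, hvP, hvC⟩ := exists_injOn_card_unhit_le C P' c hc T fun i => by
      have := hC i
      push_cast at this
      linarith
    have hhit : ∀ i, ∃ t < T, v t ∈ C i := by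
      intro i
      by_contra! hcon
      have h1 : (1 : ℝ) ≤ #{i | ∀ t < T, v t ∉ C i} := by
        have : 0 < #{i | ∀ t < T, v t ∉ C i} := card_pos.mpr ⟨i, by simpa using hcon⟩
        exact_mod_cast this
      linarith
    have hvP' : ∀ t < T, v t ∉ P ∧ ∀ s < Q * T, w s ≠ v t := by
      intro t ht
      have := hvP t ht
      rw [hP', mem_union, mem_image, not_or] at this
      exact ⟨this.1, fun s hs h => this.2 ⟨s, mem_range.mpr hs, h⟩⟩
    have hmul : (Q + 1) * T = Q * T + T := by ring
    refine ⟨fun s => if s < Q * T then w s else v (s - Q * T), ?_, ?_, ?_⟩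
    · intro i hi j hj h
      simp only [coe_range, Set.mem_Iio, hmul] at hi hj h
      split_ifs at h with h1 h2 h2
      · exact hw (by simpa using h1) (by simpa using h2) h
      · exact absurd h ((hvP' _ (by omega)).2 i h1)
      · exact absurd h.symm ((hvP' _ (by omega)).2 j h2)
      · have := hv (x₁ := i - Q * T) (x₂ := j - Q * T) (by simp; omega) (by simp; omega) h
        omega
    · intro s hs
      rw [hmul] at hs
      dsimp only
      split_ifs with h1
      · exact hwP s h1
      · exact (hvP' _ (by omega)).1
    · intro q hq i
      rcases Nat.lt_succ_iff_lt_or_eq.mp hq with hq | rfl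
      · obtain ⟨s, hs, hsq, hsC⟩ := hwC q hq i
        refine ⟨s, by omega, hsq, ?_⟩
        simpa [hs] using hsC
      · obtain ⟨t, ht, htC⟩ := hhit i
        refine ⟨q * T + t, by omega, ?_, ?_⟩
        · rw [mul_comm, Nat.mul_add_div (by omega), Nat.div_eq_of_lt ht, add_zero]
        · simpa using htC

/-- Four injective sequences with disjoint ranges can be interleaved. -/
theorem injOn_interleave_four {V : Type*} (M : ℕ) (a w b c : ℕ → V)
    (ha : Set.InjOn a (range M)) (hw : Set.InjOn w (range M)) (hb : Set.InjOn b (range M))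
    (hc : Set.InjOn c (range M))
    (haw : ∀ s < M, ∀ t < M, a s ≠ w t) (hab : ∀ s < M, ∀ t < M, a s ≠ b t)
    (hac : ∀ s < M, ∀ t < M, a s ≠ c t) (hwb : ∀ s < M, ∀ t < M, w s ≠ b t)
    (hwc : ∀ s < M, ∀ t < M, w s ≠ c t) (hbc : ∀ s < M, ∀ t < M, b s ≠ c t) :
    Set.InjOn (fun p : ℕ => if p % 4 = 0 then a (p / 4) else if p % 4 = 1 then w (p / 4) else
      if p % 4 = 2 then b (p / 4) else c (p / 4)) (range (4 * M)) := by
  intro p hp r hr h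
  simp only [coe_range, Set.mem_Iio] at hp hr h
  have hp4 : p / 4 < M := by omega
  have hr4 : r / 4 < M := by omega
  have hpr : p % 4 = r % 4 ∧ p / 4 = r / 4 := by
    split_ifs at h <;>
    first
    | exact ⟨by omega, ha (by simpa using hp4) (by simpa using hr4) h⟩
    | exact ⟨by omega, hw (by simpa using hp4) (by simpa using hr4) h⟩
    | exact ⟨by omega, hb (by simpa using hp4) (by simpa using hr4) h⟩
    | exact ⟨by omega, hc (by simpa using hp4) (by simpa using hr4) h⟩
    | exact absurd h (haw _ hp4 _ hr4)
    | exact absurd h (hab _ hp4 _ hr4)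
    | exact absurd h (hac _ hp4 _ hr4)
    | exact absurd h (hwb _ hp4 _ hr4)
    | exact absurd h (hwc _ hp4 _ hr4)
    | exact absurd h (hbc _ hp4 _ hr4)
    | exact absurd h.symm (haw _ hr4 _ hp4)
    | exact absurd h.symm (hab _ hr4 _ hp4)
    | exact absurd h.symm (hac _ hr4 _ hp4)
    | exact absurd h.symm (hwb _ hr4 _ hp4)
    | exact absurd h.symm (hwc _ hr4 _ hp4)
    | exact absurd h.symm (hbc _ hr4 _ hp4)
  omega

/-- The absorbing path `X`: its vertices at positions `4 * s + 1` can be replaced by `u (s / T)`,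
and they can in turn be inserted between any two given vertices. -/
theorem exists_absorbing_path {V : Type*} [Fintype V] [Nonempty V] (E : Bool → V → V → Prop)
    (hE : ∀ b x y, E b x y → E (!b) y x) (ε : ℕ → Bool) (Q T : ℕ) (c : ℝ)
    (hc : 0 < c)
    (hC : ∀ b₁ b₂ x y, (4 * (Q * T) + Q + c : ℝ) ≤ #{z | E b₁ x z ∧ E b₂ z y})
    (hnum : 4 * (Fintype.card V : ℝ) ^ 2 * (1 - c / Fintype.card V) ^ T < 1) :
    ∃ X u : ℕ → V, Set.InjOn X (range (4 * (Q * T))) ∧ Set.InjOn u (range Q) ∧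
      (∀ p < 4 * (Q * T), ∀ i < Q, X p ≠ u i) ∧
      (∀ p, p + 1 < 4 * (Q * T) → E (ε p) (X p) (X (p + 1))) ∧
      (∀ s < Q * T, E (ε (4 * s)) (X (4 * s)) (u (s / T)) ∧
        E (ε (4 * s + 1)) (u (s / T)) (X (4 * s + 2))) ∧
      ∀ q < Q, ∀ b₁ b₂ x y, ∃ s < Q * T, s / T = q ∧
        E b₁ x (X (4 * s + 1)) ∧ E b₂ (X (4 * s + 1)) y := by
  set M := Q * T with hM
  let C : Bool × Bool × V × V → Finset V := fun t => {z | E t.1 t.2.2.1 z ∧ E t.2.1 z t.2.2.2}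
  have hCr : ∀ t, (4 * M + Q + c : ℝ) ≤ #(C t) := fun t => by
    have := hC t.1 t.2.1 t.2.2.1 t.2.2.2
    rw [hM]
    push_cast
    exact this
  have hCn : ∀ t, 4 * M + Q ≤ #(C t) := fun t => by
    have := hCr t
    have : (4 * M + Q : ℝ) ≤ #(C t) := by linarith
    exact_mod_cast this
  have hcard : ∀ (f : ℕ → V) r, #((range r).image f) ≤ r := fun f r => by
    simpa using card_image_le (s := range r) (f := f)
  obtain ⟨u, hu, -⟩ := exists_injOn_mem_of_card_le (fun _ => (univ : Finset V)) ∅ Q (by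
    intro i _
    have h1 := hCn (true, true, Classical.arbitrary V, Classical.arbitrary V)
    have h2 := card_le_card (subset_univ (C (true, true, Classical.arbitrary V,
      Classical.arbitrary V)))
    rw [card_empty]
    omega)
  obtain ⟨w, hw, hwu, hhit⟩ := exists_injOn_blocks_hit C ((range Q).image u) c hc T Q (by
    intro t
    have h1 : (#((range Q).image u) : ℝ) ≤ Q := by exact_mod_cast hcard u Q
    have h2 := hCr t
    have h3 : (Q * T : ℝ) = M := by rw [hM]; push_cast; ring
    have h4 : (0 : ℝ) ≤ M := by positivity
    linarith) (by
    refine lt_of_eq_of_lt ?_ hnum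
    simp only [Fintype.card_prod, Fintype.card_bool]
    push_cast
    ring)
  rw [← hM] at hw hwu hhit
  let D : ℕ → Finset V := fun p => if p % 2 = 0
    then C (!ε (4 * (p / 2)), ε (4 * (p / 2)), w (p / 2), u (p / 2 / T))
    else C (ε (4 * (p / 2) + 1), !ε (4 * (p / 2) + 1), w (p / 2), u (p / 2 / T))
  obtain ⟨ab, hab, habD⟩ := exists_injOn_mem_of_card_le D
    ((range Q).image u ∪ (range M).image w) (2 * M) (by
    intro p _
    have h1 := card_union_le ((range Q).image u) ((range M).image w)
    have h2 := hcard u Q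
    have h3 := hcard w M
    have h4 : 4 * M + Q ≤ #(D p) := by
      simp only [D]
      split_ifs
      · exact hCn _
      · exact hCn _
    omega)
  obtain ⟨cc, hcc, hccD⟩ := exists_injOn_mem_of_card_le
    (fun s => C (ε (4 * s + 2), ε (4 * s + 3), ab (2 * s + 1), ab (2 * (s + 1))))
    (((range Q).image u ∪ (range M).image w) ∪ (range (2 * M)).image ab) M (by
    intro p _
    have h0 := card_union_le ((range Q).image u ∪ (range M).image w) ((range (2 * M)).image ab)
    have h1 := card_union_le ((range Q).image u) ((range M).image w)
    have h2 := hcard u Q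
    have h3 := hcard w M
    have h4 := hcard ab (2 * M)
    have h5 := hCn (ε (4 * p + 2), ε (4 * p + 3), ab (2 * p + 1), ab (2 * (p + 1)))
    omega)
  have hwu' : ∀ s < M, ∀ i < Q, u i ≠ w s := fun s hs i hi h =>
    hwu s hs (mem_image.mpr ⟨i, mem_range.mpr hi, h⟩)
  have hab' : ∀ p < 2 * M, (∀ i < Q, u i ≠ ab p) ∧ ∀ s < M, w s ≠ ab p := fun p hp => by
    have := (habD p hp).2
    rw [mem_union, mem_image, mem_image] at this
    push Not at this
    exact ⟨fun i hi => this.1 i (mem_range.mpr hi), fun i hi => this.2 i (mem_range.mpr hi)⟩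
  have hcc' : ∀ t < M, (∀ i < Q, u i ≠ cc t) ∧ (∀ s < M, w s ≠ cc t) ∧
      ∀ p < 2 * M, ab p ≠ cc t := fun t ht => by
    have := (hccD t ht).2
    rw [mem_union, mem_union, mem_image, mem_image, mem_image] at this
    push Not at this
    exact ⟨fun i hi => this.1.1 i (mem_range.mpr hi), fun i hi => this.1.2 i (mem_range.mpr hi),
      fun i hi => this.2 i (mem_range.mpr hi)⟩
  have hinjab : ∀ p < 2 * M, ∀ r < 2 * M, ab p = ab r → p = r := fun p hp r hr h =>
    hab (by simpa using hp) (by simpa using hr) h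
  let X : ℕ → V := fun p => if p % 4 = 0 then ab (2 * (p / 4)) else if p % 4 = 1 then w (p / 4) else
    if p % 4 = 2 then ab (2 * (p / 4) + 1) else cc (p / 4)
  have hX0 : ∀ s, X (4 * s) = ab (2 * s) := fun s => by
    simp only [X]
    rw [if_pos (by omega), show 4 * s / 4 = s by omega]
  have hX1 : ∀ s, X (4 * s + 1) = w s := fun s => by
    simp only [X]
    rw [if_neg (by omega), if_pos (by omega), show (4 * s + 1) / 4 = s by omega]
  have hX2 : ∀ s, X (4 * s + 2) = ab (2 * s + 1) := fun s => by
    simp only [X]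
    rw [if_neg (by omega), if_neg (by omega), if_pos (by omega),
      show (4 * s + 2) / 4 = s by omega]
  have hX3 : ∀ s, X (4 * s + 3) = cc s := fun s => by
    simp only [X]
    rw [if_neg (by omega), if_neg (by omega), if_neg (by omega),
      show (4 * s + 3) / 4 = s by omega]
  have hDa : ∀ s < M, E (!ε (4 * s)) (w s) (ab (2 * s)) ∧
      E (ε (4 * s)) (ab (2 * s)) (u (s / T)) := fun s hs => by
    have := (habD (2 * s) (by omega)).1
    simp only [D] at this
    rw [if_pos (by omega), show 2 * s / 2 = s by omega] at this
    simpa [C] using this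
  have hDb : ∀ s < M, E (ε (4 * s + 1)) (w s) (ab (2 * s + 1)) ∧
      E (!ε (4 * s + 1)) (ab (2 * s + 1)) (u (s / T)) := fun s hs => by
    have := (habD (2 * s + 1) (by omega)).1
    simp only [D] at this
    rw [if_neg (by omega), show (2 * s + 1) / 2 = s by omega] at this
    simpa [C] using this
  have hDc : ∀ s < M, E (ε (4 * s + 2)) (ab (2 * s + 1)) (cc s) ∧
      E (ε (4 * s + 3)) (cc s) (ab (2 * (s + 1))) := fun s hs => by
    simpa [C] using (hccD s hs).1
  refine ⟨X, u, ?_, hu, ?_, ?_, ?_, ?_⟩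
  · refine injOn_interleave_four M (fun s => ab (2 * s)) w (fun s => ab (2 * s + 1)) cc
      ?_ hw ?_ hcc ?_ ?_ ?_ ?_ ?_ ?_
    · intro s hs t ht h
      simp only [coe_range, Set.mem_Iio] at hs ht
      have := hinjab _ (by omega) _ (by omega) h
      omega
    · intro s hs t ht h
      simp only [coe_range, Set.mem_Iio] at hs ht
      have := hinjab _ (by omega) _ (by omega) h
      omega
    · exact fun s hs t ht h => (hab' _ (by omega)).2 t ht h.symm
    · intro s hs t ht h
      have := hinjab _ (by omega) _ (by omega) h
      omega
    · exact fun s hs t ht h => (hcc' t ht).2.2 _ (by omega) h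
    · exact fun s hs t ht h => (hab' _ (by omega)).2 s hs h
    · exact fun s hs t ht h => (hcc' t ht).2.1 s hs h
    · exact fun s hs t ht h => (hcc' t ht).2.2 _ (by omega) h
  · intro p hp i hi
    have hp4 : p / 4 < M := by omega
    simp only [X]
    split_ifs
    · exact ((hab' _ (by omega)).1 i hi).symm
    · exact (hwu' _ hp4 i hi).symm
    · exact ((hab' _ (by omega)).1 i hi).symm
    · exact ((hcc' _ hp4).1 i hi).symm
  · intro p hp
    obtain ⟨s, hs | hs | hs | hs⟩ : ∃ s, p = 4 * s ∨ p = 4 * s + 1 ∨ p = 4 * s + 2 ∨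
      p = 4 * s + 3 := ⟨p / 4, by omega⟩
    · subst hs
      rw [hX0, hX1]
      simpa using hE _ _ _ (hDa s (by omega)).1
    · subst hs
      rw [hX1, hX2]
      exact (hDb s (by omega)).1
    · subst hs
      rw [hX2, hX3]
      exact (hDc s (by omega)).1
    · subst hs
      rw [hX3, show 4 * s + 3 + 1 = 4 * (s + 1) by ring, hX0]
      exact (hDc s (by omega)).2
  · intro s hs
    rw [hX0, hX2]
    exact ⟨(hDa s hs).2, by simpa using hE _ _ _ (hDb s hs).2⟩
  · intro q hq b₁ b₂ x y
    obtain ⟨s, hs, hsq, hsC⟩ := hhit q hq (b₁, b₂, x, y)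
    refine ⟨s, hs, hsq, ?_⟩
    rw [hX1]
    simpa [C] using hsC

/-- Closing up: an absorbing path `X` with spare vertices `u` and a family of `m` columns `Y j` of
length `k` are joined to a Hamilton cycle. Between consecutive pieces we insert a vertex taken from
the absorbing path, whose place is taken by one of the `u i`. -/
theorem exists_cycle_of_absorbing_path {V : Type*} (E : Bool → V → V → Prop)
    (ε : ℕ → Bool) (m k T n : ℕ) (hk : 0 < k) (hT : 0 < T)
    (hn : n = 4 * ((m + 1) * T) + m * (k + 1) + 1)
    (X u : ℕ → V) (Y : ℕ → ℕ → V) (hX : Set.InjOn X (range (4 * ((m + 1) * T))))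
    (hu : Set.InjOn u (range (m + 1)))
    (hY : ∀ i < k, ∀ j < m, ∀ i' < k, ∀ j' < m, Y i j = Y i' j' → i = i' ∧ j = j')
    (hXu : ∀ p < 4 * ((m + 1) * T), ∀ q < m + 1, X p ≠ u q)
    (hXY : ∀ p < 4 * ((m + 1) * T), ∀ i < k, ∀ j < m, X p ≠ Y i j)
    (huY : ∀ q < m + 1, ∀ i < k, ∀ j < m, u q ≠ Y i j)
    (hEX : ∀ p, p + 1 < 4 * ((m + 1) * T) → E (ε p) (X p) (X (p + 1)))
    (hEu : ∀ s < (m + 1) * T, E (ε (4 * s)) (X (4 * s)) (u (s / T)) ∧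
        E (ε (4 * s + 1)) (u (s / T)) (X (4 * s + 2)))
    (hEY : ∀ i j, i + 1 < k → j < m →
      E (ε (4 * ((m + 1) * T) + j * (k + 1) + 1 + i)) (Y i j) (Y (i + 1) j))
    (hhit : ∀ q < m + 1, ∀ b₁ b₂ x y, ∃ s < (m + 1) * T, s / T = q ∧
        E b₁ x (X (4 * s + 1)) ∧ E b₂ (X (4 * s + 1)) y) :
    ∃ F : ℕ → V, Set.InjOn F (range n) ∧ ∀ p < n, E (ε p) (F p) (F ((p + 1) % n)) := by
  set M := (m + 1) * T with hM
  have hM0 : 0 < M := by positivity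
  let prev : ℕ → V := fun q => if q = 0 then X (4 * M - 1) else Y (k - 1) (q - 1)
  let next : ℕ → V := fun q => if q = m then X 0 else Y 0 q
  have hS : ∀ q, ∃ s, q < m + 1 → s < M ∧ s / T = q ∧
      E (ε (4 * M + q * (k + 1) - 1)) (prev q) (X (4 * s + 1)) ∧
      E (ε (4 * M + q * (k + 1))) (X (4 * s + 1)) (next q) := by
    intro q
    by_cases hq : q < m + 1
    · obtain ⟨s, hs⟩ := hhit q hq (ε (4 * M + q * (k + 1) - 1)) (ε (4 * M + q * (k + 1)))
        (prev q) (next q)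
      exact ⟨s, fun _ => ⟨hs.1, hs.2⟩⟩
    · exact ⟨0, fun h => absurd h hq⟩
  choose S hS using hS
  have hdiv : ∀ s < M, s / T < m + 1 := fun s hs => (Nat.div_lt_iff_lt_mul hT).mpr hs
  let F₀ : ℕ → V := fun p => if p < 4 * M then X p else
    if (p - 4 * M) % (k + 1) = 0 then u ((p - 4 * M) / (k + 1))
    else Y ((p - 4 * M) % (k + 1) - 1) ((p - 4 * M) / (k + 1))
  let τ : ℕ → ℕ := fun p => if p < 4 * M then
      (if p % 4 = 1 ∧ p / 4 = S (p / 4 / T) then 4 * M + (p / 4 / T) * (k + 1) else p)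
    else if (p - 4 * M) % (k + 1) = 0 then 4 * S ((p - 4 * M) / (k + 1)) + 1 else p
  have hgm : ∀ q, (4 * M + q * (k + 1) - 4 * M) % (k + 1) = 0 := fun q => by
    rw [Nat.add_sub_cancel_left, Nat.mul_mod_left]
  have hgd : ∀ q, (4 * M + q * (k + 1) - 4 * M) / (k + 1) = q := fun q => by
    rw [Nat.add_sub_cancel_left, Nat.mul_div_cancel _ (by omega)]
  have hrm : ∀ q r, r < k → (4 * M + q * (k + 1) + 1 + r - 4 * M) % (k + 1) = r + 1 :=
    fun q r hr => by
      rw [show 4 * M + q * (k + 1) + 1 + r - 4 * M = (r + 1) + q * (k + 1) by omega,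
        Nat.add_mul_mod_self_right, Nat.mod_eq_of_lt (by omega)]
  have hrd : ∀ q r, r < k → (4 * M + q * (k + 1) + 1 + r - 4 * M) / (k + 1) = q :=
    fun q r hr => by
      rw [show 4 * M + q * (k + 1) + 1 + r - 4 * M = (r + 1) + q * (k + 1) by omega,
        Nat.add_mul_div_right _ _ (by omega), Nat.div_eq_of_lt (by omega), zero_add]
  have hgapn : ∀ q < m + 1, 4 * M + q * (k + 1) < n := fun q hq => by
    have : q * (k + 1) ≤ m * (k + 1) := Nat.mul_le_mul_right _ (by omega)
    omega
  have hcase : ∀ p < n, p < 4 * M ∨ (∃ q < m + 1, p = 4 * M + q * (k + 1)) ∨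
      ∃ q < m, ∃ r < k, p = 4 * M + q * (k + 1) + 1 + r := by
    intro p hp
    by_cases h : p < 4 * M
    · exact Or.inl h
    right
    have h1 := Nat.div_add_mod (p - 4 * M) (k + 1)
    have h2 := Nat.mod_lt (p - 4 * M) (show 0 < k + 1 by omega)
    set q := (p - 4 * M) / (k + 1)
    set r := (p - 4 * M) % (k + 1)
    rw [mul_comm] at h1
    by_cases hr : r = 0
    · refine Or.inl ⟨q, ?_, by omega⟩
      by_contra hq
      have : (m + 1) * (k + 1) ≤ q * (k + 1) := Nat.mul_le_mul_right _ (by omega)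
      have h3 : (m + 1) * (k + 1) = m * (k + 1) + (k + 1) := by ring
      omega
    · refine Or.inr ⟨q, ?_, r - 1, by omega, by omega⟩
      by_contra hq
      have : m * (k + 1) ≤ q * (k + 1) := Nat.mul_le_mul_right _ (by omega)
      omega
  have hF₀X : ∀ p < 4 * M, F₀ p = X p := fun p hp => by simp only [F₀]; rw [if_pos hp]
  have hF₀u : ∀ q, F₀ (4 * M + q * (k + 1)) = u q := fun q => by
    simp only [F₀]
    rw [if_neg (by omega), if_pos (hgm q), hgd]
  have hF₀Y : ∀ q, ∀ r < k, F₀ (4 * M + q * (k + 1) + 1 + r) = Y r q := fun q r hr => by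
    simp only [F₀]
    rw [if_neg (by omega), if_neg (by rw [hrm q r hr]; omega), hrm q r hr, hrd q r hr,
      Nat.add_sub_cancel]
  have hF₀inj : Set.InjOn F₀ (range n) := by
    intro p hp p' hp' h
    simp only [coe_range, Set.mem_Iio] at hp hp'
    rcases hcase p hp with h1 | ⟨q, hq, rfl⟩ | ⟨q, hq, r, hr, rfl⟩ <;>
    rcases hcase p' hp' with h1' | ⟨q', hq', rfl⟩ | ⟨q', hq', r', hr', rfl⟩
    · rw [hF₀X p h1, hF₀X p' h1'] at h
      exact hX (by simpa using h1) (by simpa using h1') h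
    · rw [hF₀X p h1, hF₀u] at h
      exact absurd h (hXu p h1 q' hq')
    · rw [hF₀X p h1, hF₀Y q' r' hr'] at h
      exact absurd h (hXY p h1 r' hr' q' hq')
    · rw [hF₀X p' h1', hF₀u] at h
      exact absurd h.symm (hXu p' h1' q hq)
    · rw [hF₀u, hF₀u] at h
      rw [hu (by simpa using hq) (by simpa using hq') h]
    · rw [hF₀u, hF₀Y q' r' hr'] at h
      exact absurd h (huY q hq r' hr' q' hq')
    · rw [hF₀X p' h1', hF₀Y q r hr] at h
      exact absurd h.symm (hXY p' h1' r hr q hq)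
    · rw [hF₀u, hF₀Y q r hr] at h
      exact absurd h.symm (huY q' hq' r hr q hq)
    · rw [hF₀Y q r hr, hF₀Y q' r' hr'] at h
      obtain ⟨rfl, rfl⟩ := hY r hr q hq r' hr' q' hq' h
      rfl
  have hτX : ∀ p < 4 * M, ¬ (p % 4 = 1 ∧ p / 4 = S (p / 4 / T)) → τ p = p := fun p hp h => by
    simp only [τ]
    rw [if_pos hp, if_neg h]
  have hτS : ∀ q < m + 1, τ (4 * S q + 1) = 4 * M + q * (k + 1) := fun q hq => by
    obtain ⟨hs, hsq, -⟩ := hS q hq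
    simp only [τ]
    rw [if_pos (by omega), show (4 * S q + 1) / 4 = S q by omega, hsq, if_pos ⟨by omega, rfl⟩]
  have hτg : ∀ q, τ (4 * M + q * (k + 1)) = 4 * S q + 1 := fun q => by
    simp only [τ]
    rw [if_neg (by omega), if_pos (hgm q), hgd]
  have hτr : ∀ q, ∀ r < k, τ (4 * M + q * (k + 1) + 1 + r) = 4 * M + q * (k + 1) + 1 + r :=
    fun q r hr => by
      simp only [τ]
      rw [if_neg (by omega), if_neg (by rw [hrm q r hr]; omega)]
  have hslot : ∀ p < 4 * M, p % 4 = 1 ∧ p / 4 = S (p / 4 / T) →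
      ∃ q < m + 1, p = 4 * S q + 1 := fun p hp h =>
    ⟨p / 4 / T, hdiv _ (by omega), by rw [← h.2]; omega⟩
  have hττ : ∀ p < n, τ p < n ∧ τ (τ p) = p := by
    intro p hp
    rcases hcase p hp with h1 | ⟨q, hq, rfl⟩ | ⟨q, hq, r, hr, rfl⟩
    · by_cases h : p % 4 = 1 ∧ p / 4 = S (p / 4 / T)
      · obtain ⟨q, hq, rfl⟩ := hslot p h1 h
        rw [hτS q hq, hτg]
        exact ⟨hgapn q hq, rfl⟩
      · rw [hτX p h1 h, hτX p h1 h]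
        exact ⟨hp, rfl⟩
    · rw [hτg, hτS q hq]
      have := (hS q hq).1
      exact ⟨by omega, rfl⟩
    · rw [hτr q r hr, hτr q r hr]
      exact ⟨hp, rfl⟩
  refine ⟨fun p => F₀ (τ p), ?_, ?_⟩
  · intro p hp p' hp' h
    simp only [coe_range, Set.mem_Iio] at hp hp'
    have h1 := hF₀inj (by simpa using (hττ p hp).1) (by simpa using (hττ p' hp').1) h
    rw [← (hττ p hp).2, h1, (hττ p' hp').2]
  have hFX : ∀ p < 4 * M, ¬ (p % 4 = 1 ∧ p / 4 = S (p / 4 / T)) → F₀ (τ p) = X p :=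
    fun p hp h => by rw [hτX p hp h, hF₀X p hp]
  have hFS : ∀ q < m + 1, F₀ (τ (4 * S q + 1)) = u q := fun q hq => by rw [hτS q hq, hF₀u]
  have hFg : ∀ q < m + 1, F₀ (τ (4 * M + q * (k + 1))) = X (4 * S q + 1) := fun q hq => by
    have := (hS q hq).1
    rw [hτg, hF₀X _ (by omega)]
  have hFr : ∀ q, ∀ r < k, F₀ (τ (4 * M + q * (k + 1) + 1 + r)) = Y r q := fun q r hr => by
    rw [hτr q r hr, hF₀Y q r hr]
  intro p hp
  dsimp only
  rcases hcase p hp with h1 | ⟨q, hq, rfl⟩ | ⟨q, hq, r, hr, rfl⟩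
  · rw [Nat.mod_eq_of_lt (by omega)]
    by_cases h2 : p + 1 < 4 * M
    · by_cases h : p % 4 = 1 ∧ p / 4 = S (p / 4 / T)
      · obtain ⟨q, hq, rfl⟩ := hslot p h1 h
        rw [hFS q hq, hFX _ h2 (by omega)]
        have := (hEu (S q) (hS q hq).1).2
        rwa [(hS q hq).2.1] at this
      · rw [hFX p h1 h]
        by_cases h' : (p + 1) % 4 = 1 ∧ (p + 1) / 4 = S ((p + 1) / 4 / T)
        · obtain ⟨q, hq, hpq⟩ := hslot (p + 1) h2 h'
          obtain rfl : p = 4 * S q := by omega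
          rw [hFS q hq]
          have := (hEu (S q) (hS q hq).1).1
          rwa [(hS q hq).2.1] at this
        · rw [hFX _ h2 h']
          exact hEX p h2
    · have h3 := hFg 0 (by omega)
      have h4 := (hS 0 (by omega)).2.2.1
      simp only [zero_mul, add_zero, prev, if_true] at h3 h4
      obtain rfl : p = 4 * M - 1 := by omega
      rw [hFX _ h1 (by omega), show 4 * M - 1 + 1 = 4 * M by omega, h3]
      exact h4
  · rw [hFg q hq]
    have h4 := (hS q hq).2.2.2
    by_cases hqm : q = m
    · subst hqm
      rw [← hn, Nat.mod_self, hFX 0 (by omega) (by omega)]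
      simpa [next] using h4
    · have h5 := hgapn (q + 1) (by omega)
      have h6 : (q + 1) * (k + 1) = q * (k + 1) + (k + 1) := by ring
      have h7 := hFr q 0 hk
      rw [add_zero] at h7
      rw [Nat.mod_eq_of_lt (by omega), h7]
      simpa [next, hqm] using h4
  · have h5 := hgapn (q + 1) (by omega)
    have h6 : (q + 1) * (k + 1) = q * (k + 1) + (k + 1) := by ring
    rw [hFr q r hr, Nat.mod_eq_of_lt (by omega)]
    by_cases hrk : r + 1 < k
    · rw [show 4 * M + q * (k + 1) + 1 + r + 1 = 4 * M + q * (k + 1) + 1 + (r + 1) by ring,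
        hFr q _ hrk]
      exact hEY r q hrk hq
    · obtain rfl : k = r + 1 := by omega
      have h7 := hFg (q + 1) (by omega)
      have h8 := (hS (q + 1) (by omega)).2.2.1
      rw [show 4 * M + q * (r + 1 + 1) + 1 + r + 1 = 4 * M + (q + 1) * (r + 1 + 1) by omega, h7]
      rw [show 4 * M + (q + 1) * (r + 1 + 1) - 1 = 4 * M + q * (r + 1 + 1) + 1 + r by omega] at h8
      simpa [prev] using h8

/-- Large semidegrees give many common neighbours, for all four combinations of directions. -/
theorem card_filter_edge_edge_ge {V : Type*} [Fintype V] (E : Bool → V → V → Prop)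
    (hE : ∀ b x y, E b x y → E (!b) y x) (d : ℝ)
    (hdeg : ∀ b x, (Fintype.card V : ℝ) / 2 + d ≤ #{y | E b x y}) (b₁ b₂ : Bool) (x y : V) :
    2 * d ≤ (#{z | E b₁ x z ∧ E b₂ z y} : ℝ) := by
  have h1 := hdeg b₁ x
  have h2 := hdeg (!b₂) y
  have h3 : (univ.filter fun z => E (!b₂) y z) = univ.filter fun z => E b₂ z y := by
    ext z
    simp only [mem_filter, mem_univ, true_and]
    exact ⟨fun h => by simpa using hE _ _ _ h, hE _ _ _⟩
  have h4 := card_union_add_card_inter ({z | E b₁ x z} : Finset V) {z | E b₂ z y}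
  rw [← filter_and] at h4
  have h5 := card_le_univ (({z | E b₁ x z} : Finset V) ∪ ({z | E b₂ z y} : Finset V))
  rw [h3] at h2
  have h6 : (#{z | E b₁ x z} : ℝ) + #{z | E b₂ z y}
      ≤ Fintype.card V + #{z | E b₁ x z ∧ E b₂ z y} := by
    exact_mod_cast h4.symm.le.trans (by omega)
  linarith

/-- Every orientation of a Hamilton cycle, given suitable numbers `m` of columns, `k` of rows and
`T` of absorbing slots per spare vertex. -/
theorem exists_oriented_hamilton_cycle_of_params {V : Type*} [Fintype V] [Nonempty V]
    (E : Bool → V → V → Prop) (hE : ∀ b x y, E b x y → E (!b) y x) (d δ : ℝ) (m k T : ℕ)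
    (hm : 0 < m) (hk : 0 < k) (hT : 0 < T)
    (hn : Fintype.card V = 4 * ((m + 1) * T) + m * (k + 1) + 1)
    (hdeg : ∀ b x, (Fintype.card V : ℝ) / 2 + d ≤ #{y | E b x y})
    (hd : 0 < d) (hB : (4 * ((m + 1) * T) + (m + 1) : ℝ) ≤ d)
    (hδ0 : 0 ≤ δ) (hδ1 : δ ≤ 1) (hδd : 4 * δ * Fintype.card V ≤ d)
    (hT1 : 4 * (Fintype.card V : ℝ) ^ 2 * (1 - d / Fintype.card V) ^ T < 1)
    (hm1 : 4 * (Fintype.card V : ℝ) ^ 2 * Real.exp (-(δ ^ 2 * m / 8)) < 1)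
    (ε : ℕ → Bool) :
    ∃ F : ℕ → V, Set.InjOn F (range (Fintype.card V)) ∧
      ∀ p < Fintype.card V, E (ε p) (F p) (F ((p + 1) % Fintype.card V)) := by
  obtain ⟨X, u, hX, hu, hXu, hEX, hEu, hhit⟩ := exists_absorbing_path E hE ε (m + 1) T d hd
    (fun b₁ b₂ x y => by
      have := card_filter_edge_edge_ge E hE d hdeg b₁ b₂ x y
      push_cast
      linarith) hT1
  set S : Finset V := (range (4 * ((m + 1) * T))).image X ∪ (range (m + 1)).image u with hS
  have hScard : #S = 4 * ((m + 1) * T) + (m + 1) := by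
    have hdisj : Disjoint ((range (4 * ((m + 1) * T))).image X) ((range (m + 1)).image u) := by
      rw [Finset.disjoint_left]
      intro v hv hv'
      obtain ⟨p, hp, rfl⟩ := mem_image.mp hv
      obtain ⟨q, hq, h⟩ := mem_image.mp hv'
      exact hXu p (mem_range.mp hp) q (mem_range.mp hq) h.symm
    rw [hS, card_union_of_disjoint hdisj, card_image_of_injOn hX, card_image_of_injOn hu,
      card_range, card_range]
  have hcW : Fintype.card {v // v ∈ Sᶜ} = k * m := by
    rw [Fintype.card_coe, card_compl, hScard, hn, mul_comm k m, mul_add]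
    omega
  have hcWr : (Fintype.card {v // v ∈ Sᶜ} : ℝ) =
      Fintype.card V - (4 * ((m + 1) * T) + (m + 1)) := by
    rw [hcW, hn]
    push_cast
    ring
  have hnon : ∀ b x, (#{y | ¬ E b x y} : ℝ) ≤ (1 / 2 - 2 * δ) * Fintype.card {v // v ∈ Sᶜ} := by
    intro b x
    have h1 := hdeg b x
    have h2 : (#{y | E b x y} : ℝ) + #{y | ¬ E b x y} = Fintype.card V := by
      exact_mod_cast card_filter_add_card_filter_not (s := (univ : Finset V)) (fun y => E b x y)
    have h3 : (0 : ℝ) ≤ δ * (4 * ((m + 1) * T) + (m + 1)) := by positivity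
    rw [hcWr]
    linarith
  have hsub : ∀ P : V → Prop, #{y : {v // v ∈ Sᶜ} | ¬ P y} ≤ #{y | ¬ P y} := fun P =>
    card_le_card_of_injOn Subtype.val (by intro y hy; simpa using hy)
      (Subtype.val_injective.injOn)
  obtain ⟨ρ, hρ⟩ := exists_spanning_columns k m hm hcW (fun b x y => E b x y) δ hδ0 hδ1
    (fun b x => le_trans (by exact_mod_cast hsub fun y => E b x y) (hnon b x))
    (fun b y => by
      have h1 := hnon (!b) y
      have h2 := hsub fun x => E b x y
      have h3 : (univ.filter fun z => ¬ E (!b) y z) = univ.filter fun z => ¬ E b z y := by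
        ext z
        simp only [mem_filter, mem_univ, true_and]
        exact not_congr ⟨fun h => by simpa using hE _ _ _ h, hE _ _ _⟩
      rw [h3] at h1
      exact le_trans (by exact_mod_cast h2) h1)
    (by
      refine lt_of_le_of_lt ?_ hm1
      have h1 : (k * m : ℝ) ≤ Fintype.card V := by
        have : k * m ≤ Fintype.card V := by rw [← hcW]; exact Fintype.card_subtype_le _
        exact_mod_cast this
      gcongr)
    (fun i j => ε (4 * ((m + 1) * T) + j * (k + 1) + 1 + i))
  let Y : ℕ → ℕ → V := fun i j =>
    if h : i < k ∧ j < m then ρ (⟨i, h.1⟩, ⟨j, h.2⟩) else Classical.arbitrary V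
  have hYρ : ∀ i j (hi : i < k) (hj : j < m), Y i j = ρ (⟨i, hi⟩, ⟨j, hj⟩) := fun i j hi hj => by
    simp only [Y]
    rw [dif_pos ⟨hi, hj⟩]
  have hYS : ∀ i < k, ∀ j < m, Y i j ∉ S := fun i hi j hj => by
    rw [hYρ i j hi hj]
    exact mem_compl.mp (ρ (⟨i, hi⟩, ⟨j, hj⟩)).2
  refine exists_cycle_of_absorbing_path E ε m k T (Fintype.card V) hk hT hn X u Y hX hu
    ?_ hXu ?_ ?_ hEX hEu ?_ hhit
  · intro i hi j hj i' hi' j' hj' h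
    rw [hYρ i j hi hj, hYρ i' j' hi' hj'] at h
    have := ρ.injective (Subtype.val_injective h)
    simpa using this
  · intro p hp i hi j hj h
    refine hYS i hi j hj ?_
    rw [← h]
    exact mem_union_left _ (mem_image_of_mem _ (mem_range.mpr hp))
  · intro p hp i hi j hj h
    refine hYS i hi j hj ?_
    rw [← h]
    exact mem_union_right _ (mem_image_of_mem _ (mem_range.mpr hp))
  · intro i j hi hj
    rw [hYρ i j (by omega) hj, hYρ (i + 1) j hi hj]
    exact hρ i hi ⟨j, hj⟩

theorem exists_mul_add_one_modEq {m : ℕ} (hm : Odd m) (n : ℕ) :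
    ∃ T, m ≤ T ∧ T < 2 * m ∧ 4 * T + 1 ≡ n [MOD m] := by
  have hm0 : 0 < m := hm.pos
  have hcop : Nat.Coprime 4 m := by
    have : Nat.Coprime (2 ^ 2) m := Nat.Coprime.pow_left 2 (Nat.coprime_two_left.mpr hm)
    exact this
  rcases Nat.eq_or_lt_of_le (Nat.one_le_of_lt hm0) with rfl | hm1
  · exact ⟨1, le_rfl, by omega, Nat.modEq_one⟩
  obtain ⟨c, -, hc⟩ := Nat.exists_mul_mod_eq_one_of_coprime hcop hm1
  have hc' : 4 * c ≡ 1 [MOD m] := by rw [Nat.ModEq, hc, Nat.mod_eq_of_lt hm1]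
  have hlt := Nat.mod_lt ((n + (m - 1)) * c) hm0
  refine ⟨m + (n + (m - 1)) * c % m, by omega, by omega, ?_⟩
  calc 4 * (m + (n + (m - 1)) * c % m) + 1
      ≡ 4 * (0 + (n + (m - 1)) * c) + 1 [MOD m] := by
        gcongr
        · simp [Nat.ModEq]
        · exact Nat.mod_modEq _ _
    _ = 4 * c * (n + (m - 1)) + 1 := by ring
    _ ≡ 1 * (n + (m - 1)) + 1 [MOD m] := by gcongr
    _ = n + m := by omega
    _ ≡ n [MOD m] := by simp [Nat.ModEq]

theorem eventually_params :
    ∀ᶠ n : ℕ in Filter.atTop, 1 < n ∧ (144 : ℝ) * (n : ℝ) ^ (4 / 5 : ℝ) ≤ (n : ℝ) ^ (5 / 6 : ℝ) ∧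
      4 * (n : ℝ) ^ 2 * Real.exp (-((n : ℝ) ^ (1 / 15 : ℝ) / 128)) < 1 := by
  refine (Filter.eventually_gt_atTop 1).and (Filter.Eventually.and ?_ ?_)
  · have h : Filter.Tendsto (fun n : ℕ => (n : ℝ) ^ (1 / 30 : ℝ)) Filter.atTop Filter.atTop :=
      (tendsto_rpow_atTop (by norm_num)).comp tendsto_natCast_atTop_atTop
    filter_upwards [h.eventually_ge_atTop 144, Filter.eventually_gt_atTop 0] with n hn hn0
    have hn0' : (0 : ℝ) < n := by exact_mod_cast hn0
    rw [show (5 / 6 : ℝ) = 1 / 30 + 4 / 5 by norm_num, Real.rpow_add hn0']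
    gcongr
  · have h1 : Filter.Tendsto (fun n : ℕ => (n : ℝ) ^ (1 / 15 : ℝ) / 128) Filter.atTop Filter.atTop :=
      ((tendsto_rpow_atTop (by norm_num)).comp tendsto_natCast_atTop_atTop).atTop_div_const
        (by norm_num)
    have h2 := ((Real.tendsto_pow_mul_exp_neg_atTop_nhds_zero 30).comp h1).const_mul
      (4 * (128 : ℝ) ^ 30)
    rw [mul_zero] at h2
    filter_upwards [h2.eventually_lt_const one_pos, Filter.eventually_gt_atTop 0] with n hn hn0
    have hn0' : (0 : ℝ) ≤ n := by positivity
    refine lt_of_eq_of_lt ?_ hn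
    simp only [Function.comp]
    have h30 : ((n : ℝ) ^ (1 / 15 : ℝ)) ^ 30 = (n : ℝ) ^ 2 := by
      rw [← Real.rpow_natCast, ← Real.rpow_mul hn0', ← Real.rpow_natCast]
      norm_num
    rw [div_pow, h30]
    field_simp

/-- For large `n`, suitable parameters exist and every orientation of a Hamilton cycle occurs, with
vertices and directions indexed by `ℕ`. -/
theorem exists_oriented_hamilton_cycle_nat {V : Type*} [Fintype V]
    (E : Bool → V → V → Prop) (hE : ∀ b x y, E b x y → E (!b) y x)
    (hV1 : 1 < Fintype.card V)
    (hV2 : (144 : ℝ) * (Fintype.card V : ℝ) ^ (4 / 5 : ℝ) ≤ (Fintype.card V : ℝ) ^ (5 / 6 : ℝ))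
    (hV3 : 4 * (Fintype.card V : ℝ) ^ 2
      * Real.exp (-((Fintype.card V : ℝ) ^ (1 / 15 : ℝ) / 128)) < 1)
    (hdeg : ∀ b x, (Fintype.card V : ℝ) / 2 + (Fintype.card V : ℝ) ^ (5 / 6 : ℝ) ≤ #{y | E b x y})
    (ε : ℕ → Bool) :
    ∃ F : ℕ → V, Set.InjOn F (range (Fintype.card V)) ∧
      ∀ p < Fintype.card V, E (ε p) (F p) (F ((p + 1) % Fintype.card V)) := by
  set n := Fintype.card V with hn
  have hne : Nonempty V := Fintype.card_pos_iff.mp (by omega)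
  have hn1 : (1 : ℝ) < n := by exact_mod_cast hV1
  have hn0 : (0 : ℝ) < n := by linarith
  set d : ℝ := (n : ℝ) ^ (5 / 6 : ℝ) with hd
  have hd0 : 0 < d := Real.rpow_pos_of_pos hn0 _
  have hdn : d < n := by
    calc d < (n : ℝ) ^ (1 : ℝ) := Real.rpow_lt_rpow_of_exponent_lt hn1 (by norm_num)
      _ = n := Real.rpow_one _
  set y : ℝ := (n : ℝ) ^ (2 / 5 : ℝ) with hy
  have hy1 : 1 ≤ y := Real.one_le_rpow hn1.le (by norm_num)
  have hyy : y ^ 2 = (n : ℝ) ^ (4 / 5 : ℝ) := by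
    rw [hy, ← Real.rpow_natCast, ← Real.rpow_mul hn0.le]
    norm_num
  set m : ℕ := 2 * ⌊y⌋₊ + 1 with hm
  have hfl := Nat.floor_le (zero_le_one.trans hy1)
  have hlf := Nat.lt_floor_add_one y
  have hmy : y ≤ m := by rw [hm]; push_cast; linarith [Nat.cast_nonneg (α := ℝ) ⌊y⌋₊]
  have hm3 : (m : ℝ) ≤ 3 * y := by rw [hm]; push_cast; linarith
  have hm1 : (1 : ℝ) ≤ m := hy1.trans hmy
  have hm0 : 0 < m := by omega
  obtain ⟨T, hmT, hTm, hT⟩ := exists_mul_add_one_modEq (m := m) ⟨_, rfl⟩ n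
  have hmTr : (m : ℝ) ≤ T := by exact_mod_cast hmT
  have hB : (4 * ((m + 1) * T) + (m + 1) : ℝ) ≤ d := by
    have h1 : (T : ℝ) + 1 ≤ 2 * m := by exact_mod_cast hTm
    have h2 : (4 * ((m + 1) * T) + (m + 1) : ℝ) ≤ 16 * m ^ 2 := by nlinarith
    nlinarith
  have hBn : 4 * ((m + 1) * T) + (m + 1) < n := by
    have : (4 * ((m + 1) * T) + (m + 1) : ℝ) < n := by linarith
    exact_mod_cast this
  obtain ⟨k, hk⟩ : m ∣ n - (4 * ((m + 1) * T) + (m + 1)) := by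
    refine (Nat.modEq_iff_dvd' hBn.le).mp (Nat.ModEq.trans ?_ hT)
    have : 4 * ((m + 1) * T) + (m + 1) = (4 * T + 1) + m * (4 * T + 1) := by ring
    rw [this]
    simp [Nat.ModEq]
  have hk0 : 0 < k := by
    rcases Nat.eq_zero_or_pos k with rfl | h
    · omega
    · exact h
  have hkn : n = 4 * ((m + 1) * T) + m * (k + 1) + 1 := by
    rw [mul_add m k 1]
    omega
  have hdn_div : d / n = (n : ℝ) ^ (-(1 / 6) : ℝ) := by
    rw [hd, div_eq_iff hn0.ne', ← Real.rpow_add_one hn0.ne']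
    norm_num
  have hδ2 : (n : ℝ) ^ (1 / 15 : ℝ) = (d / n) ^ 2 * y := by
    rw [hdn_div, ← Real.rpow_natCast, ← Real.rpow_mul hn0.le, hy, ← Real.rpow_add hn0]
    norm_num
  have hdn1 : d / n ≤ 1 := (div_le_one hn0).mpr hdn.le
  have hdn0 : 0 ≤ d / n := by positivity
  refine exists_oriented_hamilton_cycle_of_params E hE d (d / n / 4) m k T hm0 hk0 (by omega)
    hkn hdeg hd0 hB (by positivity) (by linarith) (by field_simp; exact le_rfl) ?_ ?_ ε
  · refine lt_of_le_of_lt ?_ hV3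
    refine mul_le_mul_of_nonneg_left ?_ (by positivity)
    calc (1 - d / n) ^ T ≤ Real.exp (-(d / n)) ^ T := by
          refine pow_le_pow_left₀ (by linarith) ?_ T
          linarith [Real.add_one_le_exp (-(d / n))]
      _ = Real.exp (T * -(d / n)) := (Real.exp_nat_mul _ _).symm
      _ ≤ _ := by
          apply Real.exp_le_exp.mpr
          rw [hδ2]
          have h1 : (d / n) ^ 2 * y ≤ d / n * T := by
            rw [pow_two, mul_assoc]
            refine mul_le_mul_of_nonneg_left ?_ hdn0
            calc d / n * y ≤ 1 * y := by gcongr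
              _ ≤ T := by linarith
          have h2 : 0 ≤ (d / n) ^ 2 * y := by positivity
          linarith
  · refine lt_of_le_of_lt ?_ hV3
    refine mul_le_mul_of_nonneg_left (Real.exp_le_exp.mpr ?_) (by positivity)
    rw [hδ2]
    have h1 : (d / n) ^ 2 * y ≤ (d / n) ^ 2 * m := by gcongr
    linarith

end

/-- There exists n₀ such that every digraph on n ≥ n₀ vertices with minimum semidegree
at least n/2 + n^{5/6} contains every orientation of a Hamilton cycle: for every direction
pattern ε : ZMod n → Bool there is a cyclic ordering f of all vertices such that for each i
the edge f(i) → f(i+1) is present when ε i = true, and the edge f(i+1) → f(i) is present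
when ε i = false. -/
theorem digraph_all_orientations_hamilton :
    ∃ n₀ : ℕ, ∀ (V : Type) [Fintype V] (G : V → V → Prop),
      Irreflexive G →
      n₀ ≤ Fintype.card V →
      (∀ x : V,
        (Fintype.card V : ℝ) / 2 + (Fintype.card V : ℝ) ^ ((5 : ℝ) / 6) ≤ (outDeg G x : ℝ) ∧
        (Fintype.card V : ℝ) / 2 + (Fintype.card V : ℝ) ^ ((5 : ℝ) / 6) ≤ (inDeg G x : ℝ)) →
      ∀ ε : ZMod (Fintype.card V) → Bool,
        ∃ f : ZMod (Fintype.card V) → V, Function.Bijective f ∧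
          ∀ i, (ε i = true → G (f i) (f (i + 1))) ∧ (ε i = false → G (f (i + 1)) (f i)) := by
  classical
  obtain ⟨n₀, hn₀⟩ := Filter.eventually_atTop.mp eventually_params
  refine ⟨n₀, fun V _ G _ hV hdeg ε => ?_⟩
  obtain ⟨hV1, hV2, hV3⟩ := hn₀ _ hV
  have : NeZero (Fintype.card V) := ⟨by omega⟩
  let E : Bool → V → V → Prop := fun b x y => if b then G x y else G y x
  obtain ⟨F, hF, hFE⟩ := exists_oriented_hamilton_cycle_nat E
    (fun b x y h => by cases b <;> simpa [E] using h) hV1 hV2 hV3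
    (fun b x => by
      cases b
      · refine (hdeg x).2.trans (le_of_eq ?_)
        simp [E, inDeg, Nat.card_eq_fintype_card, Fintype.card_subtype]
      · refine (hdeg x).1.trans (le_of_eq ?_)
        simp [E, outDeg, Nat.card_eq_fintype_card, Fintype.card_subtype])
    (fun p => ε (p : ZMod (Fintype.card V)))
  have hinj : Function.Injective fun i : ZMod (Fintype.card V) => F i.val := fun i j h =>
    ZMod.val_injective _ (hF (by simpa using ZMod.val_lt i) (by simpa using ZMod.val_lt j) h)
  refine ⟨fun i => F i.val,
    (Fintype.bijective_iff_injective_and_card _).mpr ⟨hinj, ZMod.card _⟩, fun i => ?_⟩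
  have h := hFE i.val (ZMod.val_lt i)
  have hval : (i + 1).val = (i.val + 1) % Fintype.card V := by
    rw [ZMod.val_add, ZMod.val_one_eq_one_mod, Nat.add_mod_mod]
  rw [ZMod.natCast_zmod_val] at h
  dsimp only
  rw [hval]
  exact ⟨fun hi => by simpa [E, hi] using h, fun hi => by simpa [E, hi] using h⟩
end
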